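/- arXiv:1003.0982 — 4 statements merged into one kernel-verified Lean document; each statement's English description precedes it below -/
import Mathlib

section
/- Let p be a prime and G a group of order p^4 with |G'| = p^2 and |M(G)| = p^2 (i.e. s(G) = 2, since (4-1)(4-2)/2 - 1 = 2). Then G is isomorphic to one of the following presented groups: (1) ⟨a, b | a^9 = b^3 = 1, [a,b,a] = 1, [a,b,b] = a^6, [a,b,b,b] = 1⟩ (with p = 3); (2) ⟨a, b | a^p = 1, b^p = 1, [a,b,a] = [a,b,b,a] = [a,b,b,b] = 1⟩ (with p ≠ 3). -/
/-- The kernel of the canonical free presentation `FreeGroup G → G`. -/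
def presentationKernel (G : Type u) [Group G] : Subgroup (FreeGroup G) :=
  (FreeGroup.lift (id : G → G)).ker

/-- The Schur multiplier `M(G) = H₂(G, ℤ)` (second integral group homology) of a
group `G`, realised via Hopf's integral formula `H₂(G, ℤ) ≅ (R ⊓ [F, F]) / [F, R]`,
where `F = FreeGroup G` is the canonical free group surjecting onto `G` with
kernel `R`. -/
def SchurMultiplier (G : Type u) [Group G] : Type u :=
  ↥(presentationKernel G ⊓ commutator (FreeGroup G)) ⧸
    (⁅(⊤ : Subgroup (FreeGroup G)), presentationKernel G⁆.subgroupOf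
      (presentationKernel G ⊓ commutator (FreeGroup G)))

/-- A finite `p`-group `H` is extraspecial if its center, derived subgroup and
Frattini subgroup coincide and have order `p`. -/
def IsExtraspecial (p : ℕ) (H : Type*) [Group H] : Prop :=
  Subgroup.center H = commutator H ∧ Subgroup.center H = frattini H ∧
    Nat.card (Subgroup.center H) = p

/-- The commutator `[x, y] = x⁻¹y⁻¹xy`. -/
def pComm {G : Type*} [Group G] (x y : G) : G := x⁻¹ * y⁻¹ * x * y

/-- Relators of `⟨a, b ∣ a⁹ = b³ = 1, [a,b,a] = 1, [a,b,b] = a⁶, [a,b,b,b] = 1⟩`. -/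
def relsOrd81 : Set (FreeGroup (Fin 2)) :=
  { (FreeGroup.of 0) ^ 9, (FreeGroup.of 1) ^ 3,
    pComm (pComm (FreeGroup.of 0) (FreeGroup.of 1)) (FreeGroup.of 0),
    pComm (pComm (FreeGroup.of 0) (FreeGroup.of 1)) (FreeGroup.of 1) *
      ((FreeGroup.of 0) ^ 6)⁻¹,
    pComm (pComm (pComm (FreeGroup.of 0) (FreeGroup.of 1)) (FreeGroup.of 1))
      (FreeGroup.of 1) }

/-- Relators of
`⟨a, b ∣ a^p = b^p = 1, [a,b,a] = [a,b,b,a] = [a,b,b,b] = 1⟩`. -/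
def relsOrdP4Class3 (p : ℕ) : Set (FreeGroup (Fin 2)) :=
  { (FreeGroup.of 0) ^ p, (FreeGroup.of 1) ^ p,
    pComm (pComm (FreeGroup.of 0) (FreeGroup.of 1)) (FreeGroup.of 0),
    pComm (pComm (pComm (FreeGroup.of 0) (FreeGroup.of 1)) (FreeGroup.of 1))
      (FreeGroup.of 0),
    pComm (pComm (pComm (FreeGroup.of 0) (FreeGroup.of 1)) (FreeGroup.of 1))
      (FreeGroup.of 1) }


namespace P4

lemma pComm_mul {X : Type*} [Group X] (x y : X) : x * y = y * (x * pComm x y) := by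
  unfold pComm; group

lemma pComm_eq_one {X : Type*} [Group X] {x y : X} : pComm x y = 1 ↔ Commute x y := by
  unfold pComm Commute SemiconjBy
  constructor
  · intro h
    have : x * y = y * x * (x⁻¹ * y⁻¹ * x * y) := by group
    rw [this, h, mul_one]
  · intro h
    have : x⁻¹ * y⁻¹ * x * y = (y * x)⁻¹ * (x * y) := by group
    rw [this, h]; group

lemma map_pComm {X Y : Type*} [Group X] [Group Y] (f : X →* Y) (x y : X) :
    f (pComm x y) = pComm (f x) (f y) := by
  simp [pComm]

/-- conjugation formula -/
lemma conj_pow {X : Type*} [Group X] {a b c d u : X} (hab : a * b = b * (a * c))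
    (hcb : c * b = b * (c * d)) (hdb : d * b = b * (d * u)) (hub : Commute u b)
    (hcd : Commute c d) (hdu : Commute d u) (n : ℕ) :
    a * b ^ n = b ^ n * (a * (c ^ n * d ^ (n.choose 2) * u ^ (n.choose 3))) := by
  have h1 : SemiconjBy b (a * c) a := hab.symm
  have h2 : SemiconjBy b (c * d) c := hcb.symm
  have h3 : SemiconjBy b (d * u) d := hdb.symm
  have h4 : SemiconjBy b u u := hub.symm
  induction n with
  | zero => simp
  | succ n ih =>
    have h := h1.mul_right (((h2.pow_right n).mul_right (h3.pow_right (n.choose 2))).mul_right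
      (h4.pow_right (n.choose 3)))
    rw [pow_succ, ← mul_assoc, ih, mul_assoc, ← h.eq, mul_assoc (b ^ n)]
    congr 2
    rw [hcd.mul_pow, hdu.mul_pow, Nat.choose_succ_succ' n 1, Nat.choose_succ_succ' n 2,
      Nat.choose_one_right, pow_add d, pow_add u, pow_succ' c]
    simp only [mul_assoc]

lemma mul_pow_class2 {X : Type*} [Group X] {a c e : X} (hca : c * a = a * (c * e))
    (hea : Commute e a) (hec : Commute e c) (n : ℕ) :
    (a * c) ^ n = a ^ n * c ^ n * e ^ (n.choose 2) := by
  induction n with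
  | zero => simp
  | succ n ih =>
    have h1 : SemiconjBy a (c * e) c := hca.symm
    have h2 := (h1.pow_right n)
    rw [hec.symm.mul_pow] at h2
    have hE : Commute (e ^ n.choose 2) (a * c) := (hea.mul_right hec).pow_left _
    have hE2 : Commute (e ^ n) c := hec.pow_left _
    calc (a * c) ^ (n+1) = a ^ n * c ^ n * (e ^ n.choose 2 * (a * c)) := by
            rw [pow_succ, ih]; simp only [mul_assoc]
      _ = a ^ n * (c ^ n * a) * c * e ^ n.choose 2 := by rw [hE.eq]; simp only [mul_assoc]
      _ = a ^ n * a * c ^ n * (e ^ n * c) * e ^ n.choose 2 := by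
            rw [← h2.eq]; simp only [mul_assoc]
      _ = _ := by
            rw [hE2.eq, Nat.choose_succ_succ' n 1, Nat.choose_one_right, pow_add e, pow_succ a,
              pow_succ c]; simp only [mul_assoc]

/-- the Jacobi type computation -/
lemma jacobi {X : Type*} [Group X] {a b c d e u v : X} (hab : a * b = b * (a * c))
    (hcb : c * b = b * (c * d)) (hdb : d * b = b * (d * u))
    (hca : c * a = a * (c * e)) (hda : d * a = a * (d * v))
    (he : ∀ x, Commute e x) (hu : ∀ x, Commute u x) (hv : ∀ x, Commute v x) :
    Commute d a ∧ Commute c d := by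
  let f : X →* X := (MulAut.conj b⁻¹).toMonoidHom
  have key : ∀ x y : X, x * b = b * y → f x = y := by
    intro x y h
    simp [f, mul_assoc, h]
  have fa := key _ _ hab
  have fc := key _ _ hcb
  have fd := key _ _ hdb
  have fe := key _ _ (he b).eq
  have fv := key _ _ (hv b).eq
  have e1 := congrArg f hda
  simp only [map_mul, fa, fd, fv] at e1
  -- d u a c = a c d u v
  have e2 : Commute c d := by
    have l : d * u * (a * c) = a * (d * c) * (u * v) := by
      calc d * u * (a * c) = d * a * c * u := by rw [mul_assoc, (hu (a*c)).eq]; simp only [mul_assoc]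
        _ = a * (d * v) * c * u := by rw [hda]
        _ = a * d * (v * c) * u := by simp only [mul_assoc]
        _ = a * d * (c * v) * u := by rw [(hv c).eq]
        _ = _ := by rw [(hu v).eq]; simp only [mul_assoc]
    have r : a * c * (d * u * v) = a * (c * d) * (u * v) := by simp only [mul_assoc]
    rw [l, r] at e1
    exact (mul_left_cancel (mul_right_cancel e1)).symm
  refine ⟨?_, e2⟩
  have e3 := congrArg f hca
  simp only [map_mul, fa, fc, fe] at e3
  -- c d a c = a c c d e
  have l : c * d * (a * c) = a * c * (c * d * e) * v := by
    calc c * d * (a * c) = c * (d * a) * c := by simp only [mul_assoc]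
      _ = (c * a) * (d * (v * c)) := by rw [hda]; simp only [mul_assoc]
      _ = a * c * (e * (d * c * v)) := by rw [hca, (hv c).eq]; simp only [mul_assoc]
      _ = a * c * (d * c * v * e) := by rw [(he _).eq]
      _ = _ := by rw [← e2.eq, mul_assoc _ v e, (hv e).eq]; simp only [mul_assoc]
  rw [l] at e3
  have : v = 1 := mul_eq_left.mp e3
  rw [this, mul_one] at hda
  exact hda

lemma commutator_le_of_closure {X : Type*} [Group X] (N : Subgroup X) [N.Normal] (S : Set X)
    (hS : Subgroup.closure S = ⊤) (h : ∀ s ∈ S, ∀ t ∈ S, pComm s t ∈ N) :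
    commutator X ≤ N := by
  rw [← Subgroup.Normal.quotient_commutative_iff_commutator_le]
  have hT : Subgroup.closure ((QuotientGroup.mk' N) '' S) = ⊤ := by
    rw [← MonoidHom.map_closure, hS, ← MonoidHom.range_eq_map, MonoidHom.range_eq_top]
    exact QuotientGroup.mk'_surjective N
  have hc : ∀ x ∈ (QuotientGroup.mk' N) '' S, ∀ y ∈ (QuotientGroup.mk' N) '' S, x * y = y * x := by
    rintro _ ⟨s, hs, rfl⟩ _ ⟨t, ht, rfl⟩
    have : (QuotientGroup.mk' N) (pComm s t) = 1 := by simpa using h s hs t ht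
    rw [← map_mul, pComm_mul s t, map_mul, map_mul, this, mul_one]
  have := Subgroup.isMulCommutative_closure hc
  rw [hT] at this
  constructor
  constructor
  intro x y
  have := this.is_comm.comm ⟨x, trivial⟩ ⟨y, trivial⟩
  exact congrArg Subtype.val this

lemma le_of_step {X : Type*} [Group X] [Finite X] {p : ℕ} (hp : p.Prime) {H K L : Subgroup X}
    (hHK : H ≤ K) (hc : Nat.card K = p * Nat.card H) (x : X) (hxK : x ∈ K) (hxH : x ∉ H)
    (hL : H ≤ L) (hxL : x ∈ L) : K ≤ L := by
  have h1 : H ≤ L ⊓ K := le_inf hL hHK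
  have d1 : Nat.card H ∣ Nat.card (L ⊓ K : Subgroup X) := Subgroup.card_dvd_of_le h1
  have d2 : Nat.card (L ⊓ K : Subgroup X) ∣ Nat.card K := Subgroup.card_dvd_of_le inf_le_right
  obtain ⟨m, hm⟩ := d1
  have hpos : 0 < Nat.card H := Nat.card_pos
  rw [hm, hc, mul_comm p] at d2
  have d3 : m ∣ p := Nat.dvd_of_mul_dvd_mul_left hpos d2
  rcases (Nat.dvd_prime hp).mp d3 with rfl | rfl
  · rw [mul_one] at hm
    have := Subgroup.eq_of_le_of_card_ge h1 hm.le
    exact absurd (this ▸ ⟨hxL, hxK⟩ : x ∈ H) hxH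
  · have := Subgroup.eq_of_le_of_card_ge (inf_le_right : L ⊓ K ≤ K) (by rw [hm, hc, mul_comm])
    rw [← this]; exact inf_le_left

lemma exists_central {X : Type*} [Group X] [Finite X] {p : ℕ} [Fact p.Prime] (hX : IsPGroup p X)
    (N : Subgroup X) [N.Normal] (hN : p ∣ Nat.card N) : ∃ z ∈ N, z ≠ 1 ∧ ∀ x, Commute z x := by
  have := (hX.of_equiv ConjAct.toConjAct).exists_fixed_point_of_prime_dvd_card_of_fixed_point N hN
    (a := 1) (by intro g; simp)
  obtain ⟨b, hb, hne⟩ := this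
  refine ⟨b, b.2, fun h => hne (Subtype.ext h.symm), fun x => ?_⟩
  have := congrArg Subtype.val (hb (ConjAct.toConjAct x))
  rw [ConjAct.Subgroup.val_conj_smul, ConjAct.toConjAct_smul] at this
  exact (mul_inv_eq_iff_eq_mul.mp this).symm

lemma pComm_inv {X : Type*} [Group X] (x y : X) : (pComm x y)⁻¹ = pComm y x := by
  unfold pComm; group

lemma conj_zpow {X : Type*} [Group X] {a b c : X} (hab : a * b = b * (a * c))
    (hac : Commute a c) (n : ℤ) : a ^ n * b = b * (a ^ n * c ^ n) := by
  have h1 : SemiconjBy b (a * c) a := hab.symm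
  have := (h1.zpow_right n).eq
  rw [hac.mul_zpow] at this
  exact this.symm

lemma card_step {X : Type*} [Group X] [Finite X] {p : ℕ} [Fact p.Prime] (hX : IsPGroup p X)
    {H K : Subgroup X} (h : H < K) : p * Nat.card H ∣ Nat.card K := by
  obtain ⟨i, hi⟩ := (IsPGroup.iff_card).mp (hX.to_subgroup H)
  obtain ⟨j, hj⟩ := (IsPGroup.iff_card).mp (hX.to_subgroup K)
  have hp : 1 < p := (Fact.out : p.Prime).one_lt
  have hlt : Nat.card H < Nat.card K := by
    by_contra hc
    exact h.ne (Subgroup.eq_of_le_of_card_ge h.le (not_lt.mp hc))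
  rw [hi, hj] at *
  rw [← pow_succ']
  exact pow_dvd_pow _ ((Nat.pow_lt_pow_iff_right hp).mp hlt)

lemma dvd_of_zpow_mem {X : Type*} [Group X] {p : ℕ} (hp : p.Prime) {c : X} {N : Subgroup X}
    (hc : c ∉ N) (hcp : c ^ p ∈ N) {n : ℤ} (hn : c ^ n ∈ N) : (p : ℤ) ∣ n := by
  by_contra hd
  have hco : IsCoprime (p : ℤ) n := by
    rw [Int.isCoprime_iff_gcd_eq_one]
    have := (Nat.Prime.coprime_iff_not_dvd hp).mpr (fun h => hd (Int.natCast_dvd.mpr h))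
    simpa [Int.gcd] using this
  obtain ⟨u, v, huv⟩ := hco
  apply hc
  have : c = (c ^ p) ^ u * (c ^ n) ^ v := by
    rw [← zpow_natCast, ← zpow_mul, ← zpow_mul, ← zpow_add]
    rw [mul_comm _ u, mul_comm _ v, huv, zpow_one]
  rw [this]
  exact N.mul_mem (N.zpow_mem hcp _) (N.zpow_mem hn _)

structure Good (p : ℕ) {G : Type*} [Group G] (a b c d : G) : Prop where
  hc : c = pComm a b
  hd : d = pComm c b
  ca : Commute c a
  dz : ∀ x, Commute d x
  d1 : d ≠ 1
  dp : d ^ p = 1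
  cd : c ∉ Subgroup.zpowers d
  cp : c ^ p ∈ Subgroup.zpowers d
  gen : Subgroup.closure {a, b} = ⊤
  ap : ∃ k i : ℤ, a ^ p = c ^ k * d ^ i
  bp : ∃ j : ℤ, b ^ p = d ^ j

lemma exists_Z0 {p : ℕ} [hp : Fact p.Prime] {G : Type*} [Group G] [Finite G]
    (hP : IsPGroup p G) (hG' : Nat.card (commutator G) = p ^ 2) :
    ∃ z : G, orderOf z = p ∧ z ∈ commutator G ∧ (∀ x, Commute z x) ∧
      ∀ x ∈ commutator G, ∀ g, pComm x g ∈ Subgroup.zpowers z := by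
  obtain ⟨z, hz, hz1, hzc⟩ := exists_central hP (commutator G) (by rw [hG']; exact dvd_pow_self _ two_ne_zero)
  obtain ⟨k, hk⟩ := IsPGroup.iff_orderOf.mp hP z
  have hk0 : k ≠ 0 := by
    rintro rfl
    exact hz1 (orderOf_eq_one_iff.mp (by simpa using hk))
  obtain ⟨k, rfl⟩ := Nat.exists_eq_succ_of_ne_zero hk0
  have how : orderOf (z ^ (p ^ k)) = p := by
    rw [orderOf_pow_of_dvd (pow_ne_zero _ hp.out.ne_zero) (by rw [hk]; exact pow_dvd_pow _ (Nat.le_succ k)), hk,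
      Nat.succ_eq_add_one, pow_succ, Nat.mul_div_cancel_left _ (pow_pos hp.out.pos _)]
  refine ⟨z ^ (p ^ k), how, Subgroup.pow_mem _ hz _, fun x => (hzc x).pow_left _, ?_⟩
  set w := z ^ (p ^ k) with hw
  have hwc : ∀ x, Commute w x := fun x => (hzc x).pow_left _
  have hwG : w ∈ commutator G := Subgroup.pow_mem _ hz _
  have hnorm : (Subgroup.zpowers w).Normal := by
    constructor
    rintro n ⟨m, rfl⟩ g
    have : g * w ^ m * g⁻¹ = w ^ m := by
      rw [← ((hwc g).zpow_left m).eq]; group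
    exact ⟨m, this.symm⟩
  let π := QuotientGroup.mk' (Subgroup.zpowers w)
  have hnm : ((commutator G).map π).Normal :=
    Subgroup.Normal.map inferInstance π (QuotientGroup.mk'_surjective _)
  have hcard : Nat.card ((commutator G).map π) = p := by
    rw [← Subgroup.relIndex_ker, QuotientGroup.ker_mk']
    have h1 : Nat.card (Subgroup.zpowers w) * (Subgroup.zpowers w).relIndex (commutator G)
        = Nat.card (commutator G) := by
      have := Subgroup.relIndex_mul_relIndex ⊥ (Subgroup.zpowers w) (commutator G) bot_le
        (by simpa using hwG)
      rwa [Subgroup.relIndex_bot_left, Subgroup.relIndex_bot_left] at this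
    rw [Nat.card_zpowers, how, hG', pow_two] at h1
    exact Nat.eq_of_mul_eq_mul_left hp.out.pos h1
  obtain ⟨y, hy, hy1, hyc⟩ := exists_central (hP.to_quotient (Subgroup.zpowers w))
    ((commutator G).map π) (by rw [hcard])
  have hle : (commutator G).map π ≤ Subgroup.center _ :=
    le_of_step hp.out (H := ⊥) bot_le (by rw [hcard]; simp) y hy (by simpa using hy1) bot_le
      (Subgroup.mem_center_iff.mpr (fun g => ((hyc g).eq).symm))
  intro x hx g
  have h1 : π x ∈ Subgroup.center _ := hle (Subgroup.mem_map_of_mem _ hx)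
  have h2 : Commute (π x) (π g) := ((Subgroup.mem_center_iff.mp h1) (π g)).symm
  have h3 : π (pComm x g) = 1 := by rw [map_pComm]; exact pComm_eq_one.mpr h2
  simpa [π] using h3

open scoped commutatorElement in
lemma pComm_mem_commutator {X : Type*} [Group X] (x y : X) : pComm x y ∈ commutator X := by
  have : pComm x y = ⁅x⁻¹, y⁻¹⁆ := by rw [pComm, commutatorElement_def]; group
  rw [this, commutator_def]
  exact Subgroup.commutator_mem_commutator (Subgroup.mem_top _) (Subgroup.mem_top _)

lemma normal_zpowers {G : Type*} [Group G] {w : G} (hwc : ∀ x, Commute w x) :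
    (Subgroup.zpowers w).Normal := by
  constructor
  rintro n ⟨m, rfl⟩ g
  have : g * w ^ m * g⁻¹ = w ^ m := by
    rw [← ((hwc g).zpow_left m).eq]; group
  exact ⟨m, this.symm⟩

lemma exists_good {p : ℕ} [hp : Fact p.Prime] {G : Type*} [Group G]
    (hG : Nat.card G = p ^ 4) (hG' : Nat.card (commutator G) = p ^ 2) :
    ∃ a b c d : G, Good p a b c d := by
  have hfin : Finite G := Nat.finite_of_card_ne_zero (by rw [hG]; exact pow_ne_zero _ hp.out.ne_zero)
  have hP : IsPGroup p G := IsPGroup.of_card hG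
  have hpp := hp.out.one_lt
  have hpos := hp.out.pos
  obtain ⟨z, hzo, hzG, hzc, hstar⟩ := exists_Z0 hP hG'
  have hnZ := normal_zpowers hzc
  have hcZ : Nat.card (Subgroup.zpowers z) = p := by rw [Nat.card_zpowers, hzo]
  have hZG : Subgroup.zpowers z ≤ commutator G := by simpa using hzG
  have hcZG : Nat.card (commutator G) = p * Nat.card (Subgroup.zpowers z) := by
    rw [hcZ, hG', pow_two]
  have hnot : ¬ commutator G ≤ Subgroup.zpowers z := by
    intro h
    have := Subgroup.card_le_of_le h
    rw [hcZ, hG'] at this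
    nlinarith
  have hstar' : ∀ x ∈ commutator G, ∀ g, pComm g x ∈ Subgroup.zpowers z := by
    intro x hx g
    rw [← pComm_inv]
    exact Subgroup.inv_mem _ (hstar x hx g)
  -- one generator modulo the commutator subgroup is not enough
  have hone : ∀ g : G, Subgroup.closure ({g} ∪ (commutator G : Set G)) ≠ ⊤ := by
    intro g hg
    apply hnot
    apply commutator_le_of_closure _ _ hg
    rintro s (rfl | hs) t (rfl | ht)
    · rw [pComm_eq_one.mpr (Commute.refl _)]; exact Subgroup.one_mem _
    · exact hstar' _ ht _
    · exact hstar _ hs _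
    · exact hstar _ hs _
  have htwo : ∀ g h : G, Subgroup.closure ({g, h} ∪ (commutator G : Set G)) = ⊤ →
      pComm g h ∉ Subgroup.zpowers z := by
    intro g h hg hc
    apply hnot
    apply commutator_le_of_closure _ _ hg
    have hc' : pComm h g ∈ Subgroup.zpowers z := by
      rw [← pComm_inv]; exact Subgroup.inv_mem _ hc
    rintro s ((rfl | rfl) | hs) t ((rfl | rfl) | ht)
    · rw [pComm_eq_one.mpr (Commute.refl _)]; exact Subgroup.one_mem _
    · exact hc
    · exact hstar' _ ht _
    · exact hc'
    · rw [pComm_eq_one.mpr (Commute.refl _)]; exact Subgroup.one_mem _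
    · exact hstar' _ ht _
    · exact hstar _ hs _
    · exact hstar _ hs _
    · exact hstar _ hs _
  have hcardQ : Nat.card (G ⧸ commutator G) = p ^ 2 := by
    have := (commutator G).card_mul_index
    rw [hG, hG', Subgroup.index] at this
    have h2 : p ^ 4 = p ^ 2 * p ^ 2 := by ring
    rw [h2] at this
    exact Nat.eq_of_mul_eq_mul_left (pow_pos hpos _) this
  have hexp : ∀ g : G, g ^ p ∈ commutator G := by
    intro g
    by_contra hg
    apply hone g
    have ho : orderOf (g : G ⧸ commutator G) ∣ p ^ 2 := hcardQ ▸ orderOf_dvd_natCard _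
    obtain ⟨k, hk, hk'⟩ := (Nat.dvd_prime_pow hp.out).mp ho
    have hk2 : k = 2 := by
      by_contra hne
      have hk1 : k ≤ 1 := by omega
      apply hg
      have : orderOf (g : G ⧸ commutator G) ∣ p := by
        rw [hk']; simpa using pow_dvd_pow p hk1
      have := orderOf_dvd_iff_pow_eq_one.mp this
      rw [← QuotientGroup.mk_pow] at this
      exact (QuotientGroup.eq_one_iff _).mp this
    subst hk2
    have htop : Subgroup.zpowers (g : G ⧸ commutator G) = ⊤ :=
      Subgroup.eq_top_of_card_eq _ (by rw [Nat.card_zpowers, hk', hcardQ])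
    rw [eq_top_iff]
    intro x _
    have hx : (x : G ⧸ commutator G) ∈ Subgroup.zpowers (g : G ⧸ commutator G) := by
      rw [htop]; trivial
    obtain ⟨n, hn⟩ := hx
    have hn' : ((g ^ n : G) : G ⧸ commutator G) = x := by rw [← hn]; rfl
    have h3 := QuotientGroup.eq.mp hn'
    have h4 : x = g ^ n * ((g ^ n)⁻¹ * x) := by group
    rw [h4]
    have hgm : g ∈ Subgroup.closure ({g} ∪ (commutator G : Set G)) :=
      Subgroup.subset_closure (Or.inl rfl)
    exact Subgroup.mul_mem _ (Subgroup.zpow_mem _ hgm _)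
      (Subgroup.subset_closure (Or.inr h3))
  -- the commutator subgroup is not central
  have hnc : ∃ c0 ∈ commutator G, ∃ x, ¬ Commute c0 x := by
    by_contra! hcen
    have h1 : ∃ g, g ∉ commutator G := by
      by_contra! h
      have := Subgroup.eq_top_iff' _ |>.mpr h
      rw [this, Subgroup.card_top, hG] at hG'
      exact absurd (Nat.pow_right_injective hpp hG') (by norm_num)
    obtain ⟨g, hg⟩ := h1
    have h2 : ∃ h, h ∉ Subgroup.closure ({g} ∪ (commutator G : Set G)) := by
      by_contra! h
      exact hone g (Subgroup.eq_top_iff' _ |>.mpr h)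
    obtain ⟨h, hh⟩ := h2
    set L := Subgroup.closure ({g} ∪ (commutator G : Set G)) with hL
    have hgh : Subgroup.closure ({g, h} ∪ (commutator G : Set G)) = ⊤ := by
      have l1 : commutator G < L := by
        refine lt_of_le_of_ne (fun x hx => Subgroup.subset_closure (Or.inr hx)) ?_
        intro e
        exact hg (e ▸ Subgroup.subset_closure (Or.inl rfl))
      have l2 : L < Subgroup.closure ({g, h} ∪ (commutator G : Set G)) := by
        refine lt_of_le_of_ne (Subgroup.closure_mono ?_) ?_
        · rintro x (rfl | hx)
          · exact Or.inl (Or.inl rfl)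
          · exact Or.inr hx
        · intro e
          exact hh (e ▸ Subgroup.subset_closure (Or.inl (Or.inr rfl)))
      have d1 := card_step hP l1
      have d2 := card_step hP l2
      have d3 := (mul_dvd_mul_left p d1).trans d2
      apply Subgroup.eq_top_of_le_card
      rw [hG]
      rw [hG'] at d3
      have := Nat.le_of_dvd Nat.card_pos d3
      calc p ^ 4 = p * (p * p ^ 2) := by ring
        _ ≤ _ := this
    set c := pComm g h with hcdef
    have hcG : c ∈ commutator G := pComm_mem_commutator _ _
    have hcc := hcen c hcG
    have hcp : c ^ p = 1 := by
      have e := conj_zpow (pComm_mul g h) (hcc g).symm p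
      rw [zpow_natCast, zpow_natCast] at e
      have e2 := hcen _ (hexp g) h
      rw [e2.eq] at e
      exact (mul_eq_left.mp (mul_left_cancel e).symm)
    have hnc := normal_zpowers hcc
    have hle : commutator G ≤ Subgroup.zpowers c := by
      apply commutator_le_of_closure _ _ hgh
      have k1 : ∀ x ∈ commutator G, ∀ y, pComm x y ∈ Subgroup.zpowers c := by
        intro x hx y
        rw [pComm_eq_one.mpr (hcen x hx y)]; exact Subgroup.one_mem _
      have k2 : ∀ x ∈ commutator G, ∀ y, pComm y x ∈ Subgroup.zpowers c := by
        intro x hx y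
        rw [pComm_eq_one.mpr (hcen x hx y).symm]; exact Subgroup.one_mem _
      have k3 : c ∈ Subgroup.zpowers c := Subgroup.mem_zpowers c
      rintro s ((rfl | rfl) | hs) t ((rfl | rfl) | ht)
      · rw [pComm_eq_one.mpr (Commute.refl _)]; exact Subgroup.one_mem _
      · exact k3
      · exact k2 _ ht _
      · rw [← pComm_inv]; exact Subgroup.inv_mem _ k3
      · rw [pComm_eq_one.mpr (Commute.refl _)]; exact Subgroup.one_mem _
      · exact k2 _ ht _
      · exact k1 _ hs _
      · exact k1 _ hs _
      · exact k1 _ hs _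
    have h5 := Subgroup.card_le_of_le hle
    rw [hG', Nat.card_zpowers] at h5
    have h6 := orderOf_le_of_pow_eq_one hpos hcp
    nlinarith
  obtain ⟨c0, hc0, x0, hx0⟩ := hnc
  have hc0Z : c0 ∉ Subgroup.zpowers z := by
    rintro ⟨n, rfl⟩
    exact hx0 ((hzc x0).zpow_left n)
  have hcomm : ∀ x ∈ commutator G, ∀ y ∈ commutator G, Commute x y := by
    intro x hx y hy
    have := (IsPGroup.isMulCommutative_of_card_eq_prime_sq hG').is_comm.comm ⟨x, hx⟩ ⟨y, hy⟩
    exact congrArg Subtype.val this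
  have hspan : ∀ c ∈ commutator G, c ∉ Subgroup.zpowers z → ∀ L : Subgroup G,
      c ∈ L → z ∈ L → commutator G ≤ L := by
    intro c hc hcz L hcL hzL
    exact le_of_step hp.out hZG hcZG c hc hcz (by simpa using hzL) hcL
  -- the centralizer
  let φ : G →* G :=
    { toFun := fun x => pComm c0 x
      map_one' := by simp [pComm]
      map_mul' := by
        intro x y
        obtain ⟨n, hn⟩ := hstar c0 hc0 x
        have h1 : Commute (pComm c0 x) y := by rw [← hn]; exact (hzc y).zpow_left n
        have e1 : pComm c0 (x * y) = c0⁻¹ * y⁻¹ * c0 * (pComm c0 x) * y := by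
          unfold pComm; group
        have h2 : Commute (pComm c0 x) (c0⁻¹ * y⁻¹ * c0) := by
          rw [← hn]; exact (hzc _).zpow_left n
        rw [e1, ← h2.eq]
        simp only [pComm, mul_assoc] }
  have hφ : ∀ x, x ∈ φ.ker ↔ Commute c0 x := fun x => by
    rw [MonoidHom.mem_ker]; exact pComm_eq_one
  have hrange : Nat.card φ.range = p := by
    have hle : φ.range ≤ Subgroup.zpowers z := by
      rintro _ ⟨x, rfl⟩
      exact hstar c0 hc0 x
    have hd := Subgroup.card_dvd_of_le hle
    rw [hcZ] at hd
    rcases (Nat.dvd_prime hp.out).mp hd with h | h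
    · exfalso
      have := Subgroup.card_eq_one.mp h
      apply hx0
      rw [← hφ, MonoidHom.mem_ker]
      have h3 : φ x0 ∈ φ.range := ⟨x0, rfl⟩
      rw [this] at h3
      simpa using h3
    · exact h
  have hidx : φ.ker.index = p := by rw [Subgroup.index_ker, hrange]
  have hker : Nat.card φ.ker = p ^ 3 := by
    have := φ.ker.card_mul_index
    rw [hidx, hG, pow_succ] at this
    exact Nat.eq_of_mul_eq_mul_right hpos this
  have hGker : commutator G ≤ φ.ker := fun x hx => (hφ x).mpr (hcomm _ hc0 _ hx)
  have ha : ∃ a ∈ φ.ker, a ∉ commutator G := by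
    by_contra! h
    have := Subgroup.card_le_of_le (show φ.ker ≤ commutator G from h)
    rw [hG', hker] at this
    exact absurd ((Nat.pow_le_pow_iff_right hpp).mp this) (by norm_num)
  obtain ⟨a, haK, haG⟩ := ha
  set b := x0 with hb
  have hbK : b ∉ φ.ker := fun h => hx0 ((hφ _).mp h)
  have hgenL : ∀ L : Subgroup G, a ∈ L → b ∈ L → commutator G ≤ L → L = ⊤ := by
    intro L h1 h2 h3
    have h4 : φ.ker ≤ L := le_of_step hp.out hGker (by rw [hker, hG']; ring) a haK haG h3 h1
    have h5 : (⊤ : Subgroup G) ≤ L := le_of_step hp.out le_top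
      (by rw [hker, Subgroup.card_top, hG]; ring) b trivial hbK h4 h2
    exact top_le_iff.mp h5
  have hab : Subgroup.closure ({a, b} ∪ (commutator G : Set G)) = ⊤ := by
    apply hgenL
    · exact Subgroup.subset_closure (Or.inl (Or.inl rfl))
    · exact Subgroup.subset_closure (Or.inl (Or.inr rfl))
    · intro x hx; exact Subgroup.subset_closure (Or.inr hx)
  have hcZ' := htwo a b hab
  set c := pComm a b with hcdef
  have hcG : c ∈ commutator G := pComm_mem_commutator _ _
  have hdZ : pComm c b ∈ Subgroup.zpowers z := hstar c hcG b
  set d := pComm c b with hddef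
  have hd1 : d ≠ 1 := by
    intro h
    have hcb : Commute c b := pComm_eq_one.mp h
    have := hspan c hcG hcZ' (Subgroup.centralizer {b})
      (Subgroup.mem_centralizer_singleton_iff.mpr hcb.eq)
      (Subgroup.mem_centralizer_singleton_iff.mpr (hzc b).eq)
    exact hx0 (Subgroup.mem_centralizer_singleton_iff.mp (this hc0))
  have hca : Commute c a := by
    have hac0 : Commute c0 a := (hφ a).mp haK
    have := hspan c0 hc0 hc0Z (Subgroup.centralizer {a})
      (Subgroup.mem_centralizer_singleton_iff.mpr hac0.eq)
      (Subgroup.mem_centralizer_singleton_iff.mpr (hzc a).eq)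
    exact Subgroup.mem_centralizer_singleton_iff.mp (this hcG)
  have hZd : Subgroup.zpowers d = Subgroup.zpowers z := by
    apply le_antisymm
    · simpa using hdZ
    · exact le_of_step hp.out (H := ⊥) bot_le (by rw [hcZ]; simp) d hdZ (by simpa using hd1) bot_le
        (Subgroup.mem_zpowers d)
  have hdz : ∀ x, Commute d x := by
    obtain ⟨n, hn⟩ := hdZ
    intro x
    rw [← hn]; exact (hzc x).zpow_left n
  have hdp : d ^ p = 1 := by
    obtain ⟨n, hn⟩ := hdZ
    have hzp : z ^ p = 1 := by rw [← hzo]; exact pow_orderOf_eq_one z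
    have hn : z ^ n = d := hn
    rw [← hn, ← zpow_natCast, zpow_comm, zpow_natCast, hzp, one_zpow]
  have hnd := normal_zpowers hdz
  have hform : ∀ x ∈ commutator G, ∃ k i : ℤ, x = c ^ k * d ^ i := by
    intro x hx
    have := hspan c hcG hcZ' (Subgroup.zpowers c ⊔ Subgroup.zpowers d)
      (Subgroup.mem_sup_left (Subgroup.mem_zpowers c))
      (Subgroup.mem_sup_right (by rw [hZd]; exact Subgroup.mem_zpowers z))
    obtain ⟨_, ⟨k, rfl⟩, _, ⟨i, rfl⟩, e⟩ := Subgroup.mem_sup_of_normal_right.mp (this hx)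
    exact ⟨k, i, e.symm⟩
  have hcd : c ∉ Subgroup.zpowers d := by rwa [hZd]
  have hbpG := hexp b
  have hcp : c ^ p ∈ Subgroup.zpowers d := by
    have e := conj_pow (pComm_mul a b) (pComm_mul c b) (u := 1)
      (by rw [mul_one]; exact (hdz b).eq) (Commute.one_left _) (hdz c).symm (Commute.one_right _) p
    have hbpa : Commute (b ^ p) a := by
      obtain ⟨k, i, hki⟩ := hform _ hbpG
      rw [hki]
      exact (hca.zpow_left k).mul_left ((hdz a).zpow_left i)
    rw [← hbpa.eq] at e
    have e1 := mul_eq_left.mp (mul_left_cancel e).symm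
    rw [one_pow, mul_one] at e1
    rw [eq_inv_of_mul_eq_one_left e1]
    exact Subgroup.inv_mem _ (Subgroup.pow_mem _ (Subgroup.mem_zpowers d) _)
  have hbp : ∃ j : ℤ, b ^ p = d ^ j := by
    obtain ⟨k, i, hki⟩ := hform _ hbpG
    have h1 : Commute (c ^ k) b := by
      have h2 : c ^ k = b ^ p * (d ^ i)⁻¹ := by rw [hki]; group
      rw [h2]
      exact ((Commute.refl b).pow_left p).mul_left (((hdz b).zpow_left i).inv_left)
    have e := conj_zpow (pComm_mul c b) (hdz c).symm k
    rw [h1.eq] at e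
    have e1 : d ^ k = 1 := mul_eq_left.mp (mul_left_cancel e).symm
    have e2 : (p : ℤ) ∣ k := dvd_of_zpow_mem hp.out (N := ⊥) (by simpa using hd1)
      (by simpa using hdp) (by simpa using e1)
    obtain ⟨m, rfl⟩ := e2
    have h3 : c ^ ((p : ℤ) * m) ∈ Subgroup.zpowers d := by
      rw [zpow_mul, zpow_natCast]; exact Subgroup.zpow_mem _ hcp _
    obtain ⟨n, hn⟩ := h3
    have hn : d ^ n = _ := hn
    exact ⟨n + i, by rw [hki, ← hn, zpow_add]⟩
  refine ⟨a, b, c, d, hcdef, hddef, hca, hdz, hd1, hdp, hcd, hcp, ?_, hform _ (hexp a), hbp⟩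
  have haL : a ∈ Subgroup.closure {a, b} := Subgroup.subset_closure (Or.inl rfl)
  have hbL : b ∈ Subgroup.closure {a, b} := Subgroup.subset_closure (Or.inr rfl)
  have hpc : ∀ x ∈ Subgroup.closure {a, b}, ∀ y ∈ Subgroup.closure {a, b},
      pComm x y ∈ Subgroup.closure {a, b} := by
    intro x hx y hy
    exact mul_mem (mul_mem (mul_mem (inv_mem hx) (inv_mem hy)) hx) hy
  have hcL := hpc _ haL _ hbL
  have hdL := hpc _ hcL _ hbL
  apply hgenL _ haL hbL
  apply hspan c hcG hcZ' _ hcL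
  have : Subgroup.zpowers z ≤ Subgroup.closure {a, b} := by
    rw [← hZd]; simpa using hdL
  exact this (Subgroup.mem_zpowers z)

lemma zpow_reduce {X : Type*} [Group X] {p : ℕ} (hp : 0 < p) {x d : X}
    (h : x ^ p ∈ Subgroup.zpowers d) (n : ℤ) :
    ∃ r : Fin p, ∃ m : ℤ, x ^ n = x ^ (r : ℕ) * d ^ m := by
  obtain ⟨j, hj⟩ := h
  have hj : d ^ j = x ^ p := hj
  have hp' : (p : ℤ) ≠ 0 := by exact_mod_cast hp.ne'
  have h0 := Int.emod_nonneg n hp'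
  have h1 := Int.emod_lt_of_pos n (by exact_mod_cast hp : (0 : ℤ) < p)
  refine ⟨⟨(n % p).toNat, by omega⟩, j * (n / p), ?_⟩
  have e : n = ((n % p).toNat : ℤ) + p * (n / p) := by
    rw [Int.toNat_of_nonneg h0]; exact (Int.emod_add_mul_ediv n p).symm
  conv_lhs => rw [e]
  rw [zpow_add, zpow_natCast, zpow_mul, zpow_natCast, ← hj, ← zpow_mul]

lemma card_bound {X : Type*} [Group X] {p : ℕ} (hp : 0 < p) {a b c d : X}
    (hc : c = pComm a b) (hd : d = pComm c b) (ca : Commute c a) (dz : ∀ x, Commute d x)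
    (ap : a ^ p ∈ Subgroup.zpowers d) (bp : b ^ p ∈ Subgroup.zpowers d)
    (cp : c ^ p ∈ Subgroup.zpowers d) (dp : d ^ p = 1)
    (gen : Subgroup.closure {a, b} = ⊤) : Finite X ∧ Nat.card X ≤ p ^ 4 := by
  have hab : a * b = b * (a * c) := hc ▸ pComm_mul a b
  have hcb : c * b = b * (c * d) := hd ▸ pComm_mul c b
  have hcb' : c * b⁻¹ = b⁻¹ * (c * d⁻¹) := by
    have : b * (c * b⁻¹) = c * d⁻¹ := by
      have h1 : c * b * d⁻¹ = b * c := by rw [hcb]; group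
      calc b * (c * b⁻¹) = (b * c) * b⁻¹ := by group
        _ = c * b * (d⁻¹ * b⁻¹) := by rw [← h1]; group
        _ = c * b * (b⁻¹ * d⁻¹) := by rw [(dz b⁻¹).inv_left.eq]
        _ = _ := by group
    rw [← this]; group
  have hab' : a * b⁻¹ = b⁻¹ * (a * (c⁻¹ * d)) := by
    have h1 : SemiconjBy b⁻¹ (c * d⁻¹) c := hcb'.symm
    have h2 : b * a = a * b * c⁻¹ := by rw [hab]; group
    have h3 := h1.inv_right.eq
    have h4 : (c * d⁻¹)⁻¹ = c⁻¹ * d := by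
      rw [mul_inv_rev, inv_inv]; exact ((dz c).inv_right).eq
    rw [h4] at h3
    have h5 : b⁻¹ * (a * b * c⁻¹) = a := by rw [← h2]; group
    have h6 : a * b⁻¹ = b⁻¹ * a * (b * (c⁻¹ * b⁻¹)) := by
      calc a * b⁻¹ = (b⁻¹ * (a * b * c⁻¹)) * b⁻¹ := by rw [h5]
        _ = _ := by group
    rw [h6, ← h3]; group
  have hform : ∀ x : X, ∃ w r y z : ℤ, x = b ^ w * a ^ r * c ^ y * d ^ z := by
    intro x
    have hx : x ∈ Subgroup.closure {a, b} := by rw [gen]; trivial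
    induction hx using Subgroup.closure_induction_right with
    | one => exact ⟨0, 0, 0, 0, by simp⟩
    | mul_right x hx y hy ih =>
      obtain ⟨w, r, s, t, rfl⟩ := ih
      rcases hy with rfl | rfl
      · refine ⟨w, r + 1, s, t, ?_⟩
        rw [mul_assoc _ (d ^ t), ((dz y).zpow_left t).eq, ← mul_assoc, mul_assoc _ (c ^ s),
          (ca.zpow_left s).eq, zpow_add, zpow_one]
        simp only [mul_assoc]
      · refine ⟨w + 1, r, r + s, s + t, ?_⟩
        rw [mul_assoc _ (d ^ t), ((dz y).zpow_left t).eq, ← mul_assoc, mul_assoc _ (c ^ s),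
          conj_zpow hcb (dz c).symm s, ← mul_assoc, mul_assoc _ (a ^ r),
          conj_zpow hab ca.symm r, zpow_add, zpow_add, zpow_add, zpow_one]
        simp only [mul_assoc]
    | mul_inv_cancel x hx y hy ih =>
      obtain ⟨w, r, s, t, rfl⟩ := ih
      rcases hy with rfl | rfl
      · refine ⟨w, r - 1, s, t, ?_⟩
        rw [mul_assoc _ (d ^ t), ((dz y⁻¹).zpow_left t).eq, ← mul_assoc, mul_assoc _ (c ^ s),
          (ca.inv_right.zpow_left s).eq, zpow_sub, zpow_one]
        simp only [mul_assoc]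
      · refine ⟨w - 1, r, -r + s, r - s + t, ?_⟩
        have k1 : Commute a (c⁻¹ * d) := (ca.symm.inv_right).mul_right (dz a).symm
        have k2 : (c⁻¹ * d) ^ r = c ^ (-r) * d ^ r := by
          rw [((dz c).symm.inv_left).mul_zpow, inv_zpow']
        rw [mul_assoc _ (d ^ t), ((dz y⁻¹).zpow_left t).eq, ← mul_assoc, mul_assoc _ (c ^ s),
          conj_zpow hcb' (dz c).symm.inv_right s, ← mul_assoc, mul_assoc _ (a ^ r),
          conj_zpow hab' k1 r, k2, inv_zpow', sub_eq_add_neg r s, zpow_add, zpow_add, zpow_add,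
          zpow_sub, zpow_one]
        have k3 : d ^ r * c ^ s = c ^ s * d ^ r := (((dz c).zpow_left r).zpow_right s).eq
        calc _ = y ^ w * y⁻¹ * a ^ r * c ^ (-r) * (d ^ r * c ^ s) * d ^ (-s) * d ^ t := by
              simp only [mul_assoc]
          _ = _ := by rw [k3]; simp only [mul_assoc]
  let f : Fin p × Fin p × Fin p × Fin p → X := fun q =>
    b ^ (q.1 : ℕ) * a ^ (q.2.1 : ℕ) * c ^ (q.2.2.1 : ℕ) * d ^ (q.2.2.2 : ℕ)
  have hf : Function.Surjective f := by
    intro x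
    obtain ⟨w, r, s, t, rfl⟩ := hform x
    obtain ⟨i1, m1, e1⟩ := zpow_reduce hp bp w
    obtain ⟨i2, m2, e2⟩ := zpow_reduce hp ap r
    obtain ⟨i3, m3, e3⟩ := zpow_reduce hp cp s
    obtain ⟨i4, m4, e4⟩ := zpow_reduce (d := (1 : X)) hp (by rw [dp]; exact one_mem _)
      (m1 + m2 + m3 + t) (x := d)
    refine ⟨⟨i1, i2, i3, i4⟩, ?_⟩
    simp only [f]
    rw [one_zpow, mul_one] at e4
    rw [← e4, e1, e2, e3, zpow_add, zpow_add, zpow_add]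
    have q1 := ((dz (a ^ (i2 : ℕ))).zpow_left m1).eq
    have q2 := ((dz (c ^ (i3 : ℕ))).zpow_left m1).eq
    have q3 := ((dz (c ^ (i3 : ℕ))).zpow_left m2).eq
    symm
    calc _ = b ^ (i1 : ℕ) * (d ^ m1 * a ^ (i2 : ℕ)) * (d ^ m2 * c ^ (i3 : ℕ)) * d ^ m3 * d ^ t := by
          simp only [mul_assoc]
      _ = b ^ (i1 : ℕ) * a ^ (i2 : ℕ) * (d ^ m1 * c ^ (i3 : ℕ)) * d ^ m2 * d ^ m3 * d ^ t := by
          rw [q1, q3]; simp only [mul_assoc]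
      _ = _ := by rw [q2]; simp only [mul_assoc]
  refine ⟨Finite.of_surjective f hf, ?_⟩
  have := Nat.card_le_card_of_surjective f hf
  simp only [Nat.card_prod, Nat.card_fin] at this
  calc Nat.card X ≤ p * (p * (p * p)) := this
    _ = p ^ 4 := by ring

lemma iso_of {G : Type*} [Group G] [Finite G] {p : ℕ} (hG : Nat.card G = p ^ 4)
    (rels : Set (FreeGroup (Fin 2))) (a b : G) (gen : Subgroup.closure {a, b} = ⊤)
    (h : ∀ r ∈ rels, FreeGroup.lift ![a, b] r = 1)
    (hfin : Finite (PresentedGroup rels)) (hcard : Nat.card (PresentedGroup rels) ≤ p ^ 4) :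
    Nonempty (G ≃* PresentedGroup rels) := by
  let φ := PresentedGroup.toGroup h
  have hsurj : Function.Surjective φ := by
    rw [← MonoidHom.range_eq_top, ← top_le_iff, ← gen, Subgroup.closure_le]
    rintro x (rfl | rfl)
    · exact ⟨PresentedGroup.of 0, by simp [φ, PresentedGroup.toGroup.of]⟩
    · exact ⟨PresentedGroup.of 1, by simp [φ, PresentedGroup.toGroup.of]⟩
  have hbij : Function.Bijective φ := by
    refine (Nat.bijective_iff_surjective_and_card φ).mpr ⟨hsurj, ?_⟩
    exact le_antisymm (hG ▸ hcard) (Nat.card_le_card_of_surjective φ hsurj)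
  exact ⟨(MulEquiv.ofBijective φ hbij).symm⟩

lemma closure_of (rels : Set (FreeGroup (Fin 2))) :
    Subgroup.closure {(PresentedGroup.of 0 : PresentedGroup rels), PresentedGroup.of 1} = ⊤ := by
  rw [← PresentedGroup.closure_range_of rels]
  congr 1
  ext x
  simp [Set.mem_range, Fin.exists_fin_two, eq_comm]

lemma central_of_gen {X : Type*} [Group X] {a b d : X} (gen : Subgroup.closure {a, b} = ⊤)
    (h1 : Commute d a) (h2 : Commute d b) (x : X) : Commute d x := by
  have : Subgroup.closure {a, b} ≤ Subgroup.centralizer {d} := by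
    rw [Subgroup.closure_le]
    rintro y (rfl | rfl)
    · exact Subgroup.mem_centralizer_singleton_iff.mpr h1.eq.symm
    · exact Subgroup.mem_centralizer_singleton_iff.mpr h2.eq.symm
  rw [gen] at this
  exact (Subgroup.mem_centralizer_singleton_iff.mp (this (Subgroup.mem_top x))).symm

lemma pow_c {X : Type*} [Group X] {p : ℕ} {a b c d : X}
    (hc : c = pComm a b) (hd : d = pComm c b) (dz : ∀ x, Commute d x)
    (bp : b ^ p ∈ Subgroup.center X) : c ^ p * d ^ (p.choose 2) = 1 ∧ d ^ p = 1 := by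
  have hab : a * b = b * (a * c) := hc ▸ pComm_mul a b
  have hcb : c * b = b * (c * d) := hd ▸ pComm_mul c b
  have hdb : d * b = b * (d * 1) := by rw [mul_one]; exact (dz b).eq
  constructor
  · have e := conj_pow hab hcb hdb (Commute.one_left _) (dz c).symm (Commute.one_right _) p
    rw [Subgroup.mem_center_iff.mp bp a] at e
    have e1 := mul_eq_left.mp (mul_left_cancel e).symm
    simpa using e1
  · have e := conj_pow hcb hdb (u := 1) (by simp) (Commute.one_left _)
      (Commute.one_right _) (Commute.one_left _) p
    rw [Subgroup.mem_center_iff.mp bp c] at e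
    have e1 := mul_eq_left.mp (mul_left_cancel e).symm
    simpa using e1

lemma card_classP {p : ℕ} (hp : 0 < p) : Finite (PresentedGroup (relsOrdP4Class3 p)) ∧
    Nat.card (PresentedGroup (relsOrdP4Class3 p)) ≤ p ^ 4 := by
  let P := PresentedGroup (relsOrdP4Class3 p)
  let μ : FreeGroup (Fin 2) →* P := PresentedGroup.mk (relsOrdP4Class3 p)
  have gen := closure_of (relsOrdP4Class3 p)
  let a : P := PresentedGroup.of 0
  let b : P := PresentedGroup.of 1
  have ma : μ (FreeGroup.of 0) = a := rfl
  have mb : μ (FreeGroup.of 1) = b := rfl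
  have h : ∀ r ∈ relsOrdP4Class3 p, μ r = 1 := fun r hr => PresentedGroup.one_of_mem hr
  simp only [relsOrdP4Class3, Set.mem_insert_iff, Set.mem_singleton_iff, forall_eq_or_imp,
    forall_eq, map_pow, map_pComm, ma, mb] at h
  obtain ⟨h1, h2, h3, h4, h5⟩ := h
  have dz : ∀ x, Commute (pComm (pComm a b) b) x :=
    central_of_gen gen (pComm_eq_one.mp h4) (pComm_eq_one.mp h5)
  obtain ⟨k1, k2⟩ := pow_c (p := p) (a := a) (b := b) rfl rfl dz (by rw [h2]; exact one_mem _)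
  refine card_bound hp (a := a) (b := b) rfl rfl (pComm_eq_one.mp h3) dz (by rw [h1]; exact one_mem _)
    (by rw [h2]; exact one_mem _) ?_ k2 gen
  rw [eq_inv_of_mul_eq_one_left k1]
  exact Subgroup.inv_mem _ (Subgroup.pow_mem _ (Subgroup.mem_zpowers _) _)

lemma card_81 : Finite (PresentedGroup relsOrd81) ∧
    Nat.card (PresentedGroup relsOrd81) ≤ 3 ^ 4 := by
  let P := PresentedGroup relsOrd81
  let μ : FreeGroup (Fin 2) →* P := PresentedGroup.mk relsOrd81
  have gen := closure_of relsOrd81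
  let a : P := PresentedGroup.of 0
  let b : P := PresentedGroup.of 1
  have ma : μ (FreeGroup.of 0) = a := rfl
  have mb : μ (FreeGroup.of 1) = b := rfl
  have h : ∀ r ∈ relsOrd81, μ r = 1 := fun r hr => PresentedGroup.one_of_mem hr
  simp only [relsOrd81, Set.mem_insert_iff, Set.mem_singleton_iff, forall_eq_or_imp,
    forall_eq, map_pow, map_mul, map_inv, map_pComm, ma, mb] at h
  obtain ⟨h1, h2, h3, h4, h5⟩ := h
  have h4' : pComm (pComm a b) b = a ^ 6 := mul_inv_eq_one.mp h4
  have dz : ∀ x, Commute (pComm (pComm a b) b) x :=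
    central_of_gen gen (by rw [h4']; exact (Commute.refl a).pow_left 6) (pComm_eq_one.mp h5)
  obtain ⟨k1, k2⟩ := pow_c (p := 3) (a := a) (b := b) rfl rfl dz (by rw [h2]; exact one_mem _)
  refine card_bound (by norm_num) (a := a) (b := b) rfl rfl (pComm_eq_one.mp h3) dz ?_
    (by rw [h2]; exact one_mem _) ?_ k2 gen
  · have : a ^ 3 * pComm (pComm a b) b = 1 := by rw [h4', ← pow_add]; exact h1
    rw [eq_inv_of_mul_eq_one_left this]
    exact Subgroup.inv_mem _ (Subgroup.mem_zpowers _)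
  · rw [eq_inv_of_mul_eq_one_left k1]
    exact Subgroup.inv_mem _ (Subgroup.pow_mem _ (Subgroup.mem_zpowers _) _)

lemma zp1 {Y : Type*} [Group Y] {p : ℕ} (x : Y) (n : ℤ) (hx : x ^ p = 1) (h : (p : ℤ) ∣ n) :
    x ^ n = 1 := by
  obtain ⟨m, rfl⟩ := h
  rw [zpow_mul, zpow_natCast, hx, one_zpow]

lemma np1 {Y : Type*} [Group Y] {p : ℕ} (x : Y) (n : ℕ) (hx : x ^ p = 1) (h : p ∣ n) :
    x ^ n = 1 := by
  obtain ⟨m, rfl⟩ := h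
  rw [pow_mul, hx, one_pow]

lemma normal_of_gen {X : Type*} [Group X] (gens : Set X) (hgens : Subgroup.closure gens = ⊤)
    (T : Set X) (h : ∀ g ∈ gens, ∀ t ∈ T, g * t * g⁻¹ ∈ Subgroup.closure T ∧
      g⁻¹ * t * g ∈ Subgroup.closure T) : (Subgroup.closure T).Normal := by
  have h1 : ∀ g : X, (∀ t ∈ T, g * t * g⁻¹ ∈ Subgroup.closure T) →
      ∀ n ∈ Subgroup.closure T, g * n * g⁻¹ ∈ Subgroup.closure T := by
    intro g hg n hn
    have : Subgroup.closure T ≤ (Subgroup.closure T).comap (MulAut.conj g).toMonoidHom := by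
      rw [Subgroup.closure_le]
      intro t ht
      exact hg t ht
    exact this hn
  constructor
  intro n hn g
  have hg : g ∈ Subgroup.closure gens := by rw [hgens]; trivial
  induction hg using Subgroup.closure_induction_left with
  | one => simpa using hn
  | mul_left x hx y hy ih =>
    have := h1 x (fun t ht => (h x hx t ht).1) _ ih
    have e : x * y * n * (x * y)⁻¹ = x * (y * n * y⁻¹) * x⁻¹ := by group
    rwa [e]
  | inv_mul_cancel x hx y hy ih =>
    have := h1 x⁻¹ (fun t ht => by rw [inv_inv]; exact (h x hx t ht).2) _ ih
    have e : x⁻¹ * y * n * (x⁻¹ * y)⁻¹ = x⁻¹ * (y * n * y⁻¹) * x⁻¹⁻¹ := by group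
    rwa [e]

lemma card_le_of_le_zpowers {X : Type*} [Group X] {p : ℕ} (hp : 1 < p) {S : Subgroup X} {e : X}
    (he : e ^ p = 1) (hS : S ≤ Subgroup.zpowers e) (hc : Nat.card S = p ^ 2) : False := by
  have hfin : Finite (Subgroup.zpowers e) := by
    change Finite ((Subgroup.zpowers e : Set X) : Type _)
    rw [Set.finite_coe_iff, finite_zpowers, isOfFinOrder_iff_pow_eq_one]
    exact ⟨p, by omega, he⟩
  have h1 := Nat.card_le_card_of_injective _ (Subgroup.inclusion_injective hS)
  rw [hc, Nat.card_zpowers] at h1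
  have h2 := orderOf_le_of_pow_eq_one (by omega) he
  nlinarith

lemma xmain {p : ℕ} (hp : p.Prime) {X G : Type*} [Group X] [Group G] (π : X →* G)
    (hπ : Function.Surjective π) (hker : ∀ z, π z = 1 → ∀ x, Commute z x)
    (S : Subgroup X) (hS1 : S ≤ π.ker) (hS2 : S ≤ commutator X) (hS : Nat.card S = p ^ 2)
    {a b c d : G} (hg : Good p a b c d) :
    p ≠ 2 ∧ b ^ p = 1 ∧ (p = 3 → a ^ p = d⁻¹) ∧ (p ≠ 3 → a ^ p = 1) := by
  obtain ⟨hc, hd, ca, dz, d1, dp, cd, cp, gen, ⟨k, i, hap⟩, ⟨j, hbp⟩⟩ := hg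
  obtain ⟨A, hA⟩ := hπ a
  obtain ⟨B, hB⟩ := hπ b
  obtain ⟨C, hC⟩ : ∃ C, C = pComm A B := ⟨_, rfl⟩
  obtain ⟨D, hD⟩ : ∃ D, D = pComm C B := ⟨_, rfl⟩
  obtain ⟨E, hE⟩ : ∃ E, E = pComm C A := ⟨_, rfl⟩
  obtain ⟨U, hU⟩ : ∃ U, U = pComm D B := ⟨_, rfl⟩
  obtain ⟨V, hV⟩ : ∃ V, V = pComm D A := ⟨_, rfl⟩
  have πC : π C = c := by rw [hC, map_pComm, hA, hB, hc]
  have πD : π D = d := by rw [hD, map_pComm, πC, hB, hd]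
  have Ez : ∀ x, Commute E x := hker _ (by
    rw [hE, map_pComm, πC, hA]; exact pComm_eq_one.mpr ca)
  have Uz : ∀ x, Commute U x := hker _ (by
    rw [hU, map_pComm, πD, hB]; exact pComm_eq_one.mpr (dz b))
  have Vz : ∀ x, Commute V x := hker _ (by
    rw [hV, map_pComm, πD, hA]; exact pComm_eq_one.mpr (dz a))
  have hab : A * B = B * (A * C) := hC ▸ pComm_mul A B
  have hcb : C * B = B * (C * D) := hD ▸ pComm_mul C B
  have hdb : D * B = B * (D * U) := hU ▸ pComm_mul D B
  have hca : C * A = A * (C * E) := hE ▸ pComm_mul C A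
  have hda : D * A = A * (D * V) := hV ▸ pComm_mul D A
  obtain ⟨DA, CD⟩ := jacobi hab hcb hdb hca hda Ez Uz Vz
  -- powers
  have hz2 : ∀ x, Commute ((D ^ j)⁻¹ * B ^ p) x := hker _ (by
    rw [map_mul, map_inv, map_zpow, map_pow, πD, hB, hbp]; group)
  have hBp : B ^ p = D ^ j * ((D ^ j)⁻¹ * B ^ p) := by group
  have hz1 : ∀ x, Commute ((C ^ k * D ^ i)⁻¹ * A ^ p) x := hker _ (by
    rw [map_mul, map_inv, map_mul, map_zpow, map_zpow, map_pow, πD, πC, hA, hap]; group)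
  have hAp : A ^ p = C ^ k * D ^ i * ((C ^ k * D ^ i)⁻¹ * A ^ p) := by group
  have BpA : Commute (B ^ p) A := by
    rw [hBp]; exact (DA.zpow_left j).mul_left (hz2 _)
  have BpC : Commute (B ^ p) C := by
    rw [hBp]; exact (CD.symm.zpow_left j).mul_left (hz2 _)
  have BpD : Commute (B ^ p) D := by
    rw [hBp]; exact ((Commute.refl D).zpow_left j).mul_left (hz2 _)
  have R1 : C ^ p * D ^ (p.choose 2) * U ^ (p.choose 3) = 1 := by
    have e := conj_pow hab hcb hdb (Uz B) CD (Uz D).symm p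
    rw [← BpA.eq] at e
    exact mul_eq_left.mp (mul_left_cancel e).symm
  have R2 : D ^ p * U ^ (p.choose 2) = 1 := by
    have e := conj_pow hcb hdb (u := 1) (by rw [mul_one]; exact (Uz B).eq) (Commute.one_left _)
      (Uz D).symm (Commute.one_right _) p
    rw [← BpC.eq] at e
    have := mul_eq_left.mp (mul_left_cancel e).symm
    simpa using this
  have R3 : U ^ p = 1 := by
    have e := conj_pow hdb (d := 1) (u := 1) (by rw [mul_one]; exact (Uz B).eq) (by simp)
      (Commute.one_left _) (Commute.one_right _) (Commute.one_right _) p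
    rw [← BpD.eq] at e
    have := mul_eq_left.mp (mul_left_cancel e).symm
    simpa using this
  have R4 : E ^ p = 1 := by
    have e := conj_pow hca (d := 1) (u := 1) (by rw [mul_one]; exact (Ez A).eq) (by simp)
      (Commute.one_left _) (Commute.one_right _) (Commute.one_right _) p
    have ApC : Commute (A ^ p) C := by
      rw [hAp]
      exact (((Commute.refl C).zpow_left k).mul_left (CD.symm.zpow_left i)).mul_left (hz1 _)
    rw [← ApC.eq] at e
    have := mul_eq_left.mp (mul_left_cancel e).symm
    simpa using this
  have R5 : C ^ p * E ^ (p.choose 2) = D ^ k * U ^ i := by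
    have s1 : SemiconjBy B (A * C) A := hab.symm
    have e1 := (s1.pow_right p).eq
    rw [mul_pow_class2 hca (Ez A) (Ez C)] at e1
    have s2 : SemiconjBy B (C * D) C := hcb.symm
    have s3 : SemiconjBy B (D * U) D := hdb.symm
    have s4 : SemiconjBy B ((C ^ k * D ^ i)⁻¹ * A ^ p) ((C ^ k * D ^ i)⁻¹ * A ^ p) :=
      (hz1 B).symm
    have e2 := (((s2.zpow_right k).mul_right (s3.zpow_right i)).mul_right s4).eq
    rw [← hAp, ← e1, CD.mul_zpow, (Uz D).symm.mul_zpow] at e2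
    have e3 := mul_left_cancel e2
    have e4 : C ^ k * D ^ k * (D ^ i * U ^ i) * ((C ^ k * D ^ i)⁻¹ * A ^ p)
        = A ^ p * (D ^ k * U ^ i) := by
      have q1 : D ^ k * (D ^ i * U ^ i) = D ^ i * (D ^ k * U ^ i) := by
        rw [← mul_assoc, ← mul_assoc, ← zpow_add, ← zpow_add, add_comm]
      rw [mul_assoc (C ^ k), q1, ← mul_assoc (C ^ k), mul_assoc (C ^ k * D ^ i),
        ← (hz1 (D ^ k * U ^ i)).eq]
      group
    rw [e4, mul_assoc (A ^ p)] at e3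
    exact (mul_left_cancel e3).symm
  have R6 : U ^ j = 1 := by
    have e := conj_zpow hdb (Uz D).symm j
    have q : Commute (D ^ j) B := by
      have q1 : D ^ j = B ^ p * ((D ^ j)⁻¹ * B ^ p)⁻¹ := by group
      rw [q1]
      exact ((Commute.refl B).pow_left p).mul_left (hz2 B).inv_left
    rw [q.eq] at e
    exact mul_eq_left.mp (mul_left_cancel e).symm
  -- generators of X and its commutator subgroup
  have genX : Subgroup.closure ({A, B} ∪ (π.ker : Set X)) = ⊤ := by
    have h1 : π.ker ≤ Subgroup.closure ({A, B} ∪ (π.ker : Set X)) :=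
      fun x hx => Subgroup.subset_closure (Or.inr hx)
    have h2 : (Subgroup.closure ({A, B} ∪ (π.ker : Set X))).map π = ⊤ := by
      rw [← top_le_iff, ← gen, Subgroup.closure_le]
      rintro x (rfl | rfl)
      · exact ⟨A, Subgroup.subset_closure (Or.inl (Or.inl rfl)), hA⟩
      · exact ⟨B, Subgroup.subset_closure (Or.inl (Or.inr rfl)), hB⟩
    rw [← Subgroup.comap_map_eq_self h1, h2, Subgroup.comap_top]
  have hT : commutator X ≤ Subgroup.closure {C, D, E, U} := by
    have mC : C ∈ Subgroup.closure {C, D, E, U} := Subgroup.subset_closure (by simp)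
    have mD : D ∈ Subgroup.closure {C, D, E, U} := Subgroup.subset_closure (by simp)
    have mE : E ∈ Subgroup.closure {C, D, E, U} := Subgroup.subset_closure (by simp)
    have mU : U ∈ Subgroup.closure {C, D, E, U} := Subgroup.subset_closure (by simp)
    have conj1 : ∀ g t : X, Commute t g → t ∈ Subgroup.closure {C, D, E, U} →
        g * t * g⁻¹ ∈ Subgroup.closure {C, D, E, U} ∧
        g⁻¹ * t * g ∈ Subgroup.closure {C, D, E, U} := by
      intro g t h ht
      have e1 : g * t * g⁻¹ = t := by rw [← h.eq]; group
      have e2 : g⁻¹ * t * g = t := by rw [mul_assoc, h.eq]; group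
      rw [e1, e2]; exact ⟨ht, ht⟩
    have hn : (Subgroup.closure {C, D, E, U}).Normal := by
      apply normal_of_gen _ genX
      rintro g ((rfl | rfl) | hg) t (rfl | rfl | rfl | rfl)
      · have e2 : g⁻¹ * t * g = t * E := by rw [mul_assoc, hca]; group
        have e1 : g * t * g⁻¹ = t * E⁻¹ := by
          have : g * t = t * g * E⁻¹ := by rw [hca]; group
          rw [this, mul_assoc, (Ez g⁻¹).inv_left.eq]; group
        rw [e1, e2]
        exact ⟨mul_mem mC (inv_mem mE), mul_mem mC mE⟩
      · exact conj1 _ _ DA mD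
      · exact conj1 _ _ (Ez _) mE
      · exact conj1 _ _ (Uz _) mU
      · have e2 : g⁻¹ * t * g = t * D := by rw [mul_assoc, hcb]; group
        have e0 : g * D * g⁻¹ = D * U⁻¹ := by
          have : g * D = D * g * U⁻¹ := by rw [hdb]; group
          rw [this, mul_assoc, (Uz g⁻¹).inv_left.eq]; group
        have e1 : g * t * g⁻¹ = t * (D * U⁻¹)⁻¹ := by
          have : g * t = t * g * D⁻¹ := by rw [hcb]; group
          rw [this, ← e0]; group
        rw [e1, e2]
        exact ⟨mul_mem mC (inv_mem (mul_mem mD (inv_mem mU))), mul_mem mC mD⟩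
      · have e2 : g⁻¹ * t * g = t * U := by rw [mul_assoc, hdb]; group
        have e0 : g * t * g⁻¹ = t * U⁻¹ := by
          have : g * t = t * g * U⁻¹ := by rw [hdb]; group
          rw [this, mul_assoc, (Uz g⁻¹).inv_left.eq]; group
        rw [e0, e2]
        exact ⟨mul_mem mD (inv_mem mU), mul_mem mD mU⟩
      · exact conj1 _ _ (Ez _) mE
      · exact conj1 _ _ (Uz _) mU
      · exact conj1 _ _ (hker g hg _).symm mC
      · exact conj1 _ _ (hker g hg _).symm mD
      · exact conj1 _ _ (hker g hg _).symm mE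
      · exact conj1 _ _ (hker g hg _).symm mU
    apply commutator_le_of_closure _ _ genX
    have k1 : ∀ x y : X, Commute x y → pComm x y ∈ Subgroup.closure {C, D, E, U} := by
      intro x y h
      rw [pComm_eq_one.mpr h]; exact one_mem _
    rintro s ((rfl | rfl) | hs) t ((rfl | rfl) | ht)
    · exact k1 _ _ (Commute.refl _)
    · rw [← hC]; exact mC
    · exact k1 _ _ (hker t ht _).symm
    · rw [← pComm_inv, ← hC]; exact inv_mem mC
    · exact k1 _ _ (Commute.refl _)
    · exact k1 _ _ (hker t ht _).symm
    · exact k1 _ _ (hker s hs _)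
    · exact k1 _ _ (hker s hs _)
    · exact k1 _ _ (hker s hs _)
  have hdvd : ∀ n : ℤ, d ^ n = 1 → (p : ℤ) ∣ n := fun n hn =>
    dvd_of_zpow_mem hp (N := ⊥) (by simpa using d1) (by simpa using dp) (by simpa using hn)
  have hcvd : ∀ n : ℤ, c ^ n ∈ Subgroup.zpowers d → (p : ℤ) ∣ n := fun n hn =>
    dvd_of_zpow_mem hp cd cp hn
  have p2 : p ≠ 2 := by
    rintro rfl
    simp only [Nat.choose_self, pow_one, show Nat.choose 2 3 = 0 from rfl, pow_zero, mul_one]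
      at R1 R2 R5
    have zC : C ∈ Subgroup.zpowers C := Subgroup.mem_zpowers C
    have zD : D ∈ Subgroup.zpowers C := by
      rw [eq_inv_of_mul_eq_one_right R1]; exact inv_mem (pow_mem zC 2)
    have zU : U ∈ Subgroup.zpowers C := by
      rw [eq_inv_of_mul_eq_one_right R2]; exact inv_mem (pow_mem zD 2)
    have zE : E ∈ Subgroup.zpowers C := by
      have : E = (C ^ 2)⁻¹ * (D ^ k * U ^ i) := by rw [← R5]; group
      rw [this]
      exact mul_mem (inv_mem (pow_mem zC 2)) (mul_mem (zpow_mem zD k) (zpow_mem zU i))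
    have hTC : Subgroup.closure {C, D, E, U} ≤ Subgroup.zpowers C := by
      rw [Subgroup.closure_le]
      rintro x (rfl | rfl | rfl | rfl) <;> assumption
    have hC4 : (C ^ 4) ^ 2 = 1 := by
      have q1 : C ^ 2 = D⁻¹ := eq_inv_of_mul_eq_one_left R1
      have q2 : C ^ 4 = U := by
        rw [show 4 = 2 * 2 from rfl, pow_mul, q1, inv_pow]
        exact (eq_inv_of_mul_eq_one_right R2).symm
      rw [q2]; exact R3
    have hcd2 : c ^ 2 = d⁻¹ := by
      have := congrArg π R1
      rw [map_mul, map_pow, πC, πD, map_one] at this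
      exact eq_inv_of_mul_eq_one_left this
    refine card_le_of_le_zpowers (by norm_num) hC4 ?_ hS
    intro s hs
    obtain ⟨n, hn⟩ := hTC (hT (hS2 hs))
    have hn : C ^ n = s := hn
    have h1 : c ^ n = 1 := by
      have := hS1 hs
      rw [MonoidHom.mem_ker, ← hn, map_zpow, πC] at this
      exact this
    obtain ⟨m, rfl⟩ := hcvd n (by rw [h1]; exact one_mem _)
    rw [zpow_mul, zpow_natCast, hcd2, inv_zpow, inv_eq_one] at h1
    obtain ⟨l, rfl⟩ := hdvd m h1
    refine ⟨l, ?_⟩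
    change (C ^ 4) ^ l = s
    rw [← hn, ← zpow_natCast, ← zpow_mul]
    congr 1
    push_cast; ring
  have hp3 : 2 < p := lt_of_le_of_ne hp.two_le (Ne.symm p2)
  have ch2 : p ∣ p.choose 2 := hp.dvd_choose_self (by norm_num) hp3
  have Dp : D ^ p = 1 := by
    rw [np1 U _ R3 ch2, mul_one] at R2; exact R2
  rw [np1 D _ Dp ch2, mul_one] at R1
  rw [np1 E _ R4 ch2, mul_one] at R5
  have cp1 : c ^ p = 1 := by
    have := congrArg π R1
    rw [map_mul, map_pow, map_pow, πC, hU, map_pComm, πD, hB, pComm_eq_one.mpr (dz b), map_one,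
      one_pow, mul_one] at this
    exact this
  have hk : (p : ℤ) ∣ k := by
    apply hdvd
    have := congrArg π R5
    rw [map_pow, πC, cp1, map_mul, map_zpow, map_zpow, πD, hU, map_pComm, πD, hB,
      pComm_eq_one.mpr (dz b), one_zpow, mul_one] at this
    exact this.symm
  rw [zp1 D k Dp hk, one_mul] at R5
  have hU1 : U ≠ 1 := by
    intro hU1
    rw [hU1, one_pow, mul_one] at R1
    have Dz : ∀ x, Commute D x := by
      have : Subgroup.closure ({A, B} ∪ (π.ker : Set X)) ≤ Subgroup.centralizer {D} := by
        rw [Subgroup.closure_le]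
        rintro y ((rfl | rfl) | hy)
        · exact Subgroup.mem_centralizer_singleton_iff.mpr DA.eq.symm
        · rw [hU1, mul_one] at hdb
          exact Subgroup.mem_centralizer_singleton_iff.mpr hdb.symm
        · exact Subgroup.mem_centralizer_singleton_iff.mpr (hker y hy D).eq
      intro x
      rw [genX] at this
      exact (Subgroup.mem_centralizer_singleton_iff.mp (this (Subgroup.mem_top x))).symm
    have n1 := normal_zpowers Dz
    have n2 := normal_zpowers Ez
    have hT2 : Subgroup.closure {C, D, E, U} ≤
        (Subgroup.zpowers C ⊔ Subgroup.zpowers D) ⊔ Subgroup.zpowers E := by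
      rw [Subgroup.closure_le]
      rintro x (rfl | rfl | rfl | rfl)
      · exact Subgroup.mem_sup_left (Subgroup.mem_sup_left (Subgroup.mem_zpowers _))
      · exact Subgroup.mem_sup_left (Subgroup.mem_sup_right (Subgroup.mem_zpowers _))
      · exact Subgroup.mem_sup_right (Subgroup.mem_zpowers _)
      · rw [hU1]; exact one_mem _
    refine card_le_of_le_zpowers hp.one_lt R4 ?_ hS
    intro s hs
    obtain ⟨y, hy, w, hw, e⟩ := Subgroup.mem_sup_of_normal_right.mp (hT2 (hT (hS2 hs)))
    obtain ⟨_, ⟨x, rfl⟩, _, ⟨m, rfl⟩, e'⟩ := Subgroup.mem_sup_of_normal_right.mp hy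
    have e' : C ^ x * D ^ m = y := e'
    have πw : π w = 1 := by
      obtain ⟨n, rfl⟩ := hw
      change π (E ^ n) = 1
      rw [map_zpow, hE, map_pComm, πC, hA, pComm_eq_one.mpr ca, one_zpow]
    have h1 : c ^ x * d ^ m = 1 := by
      have := hS1 hs
      rw [MonoidHom.mem_ker, ← e, map_mul, πw, mul_one, ← e', map_mul, map_zpow, map_zpow,
        πC, πD] at this
      exact this
    have hx : (p : ℤ) ∣ x := by
      apply hcvd
      rw [eq_inv_of_mul_eq_one_left h1]
      exact inv_mem (zpow_mem (Subgroup.mem_zpowers d) m)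
    rw [zp1 c x cp1 hx, one_mul] at h1
    have hm := hdvd m h1
    rw [zp1 C x R1 hx, zp1 D m Dp hm, one_mul] at e'
    rw [← e, ← e', one_mul]
    exact hw
  have huvd : ∀ n : ℤ, U ^ n = 1 → (p : ℤ) ∣ n := fun n hn =>
    dvd_of_zpow_mem hp (N := ⊥) (by simpa using hU1) (by simpa using R3) (by simpa using hn)
  have hap' : a ^ p = d ^ i := by rw [hap, zp1 c k cp1 hk, one_mul]
  have hi : (p : ℤ) ∣ i + (p.choose 3 : ℕ) := by
    apply huvd
    rw [zpow_add, zpow_natCast, ← R5]; exact R1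
  refine ⟨p2, ?_, ?_, ?_⟩
  · rw [hbp]; exact zp1 d j dp (huvd j R6)
  · rintro rfl
    rw [hap']
    apply eq_inv_of_mul_eq_one_left
    have := zp1 d _ dp hi
    rwa [zpow_add, Nat.choose_self, Nat.cast_one, zpow_one] at this
  · intro h3
    rw [hap']
    apply zp1 d i dp
    have : p ∣ p.choose 3 := hp.dvd_choose_self (by norm_num) (by omega)
    exact (Int.dvd_add_left (Int.natCast_dvd_natCast.mpr this)).mp hi

lemma schur_setup {G : Type*} [Group G] {n : ℕ} (hM : Nat.card (SchurMultiplier G) = n)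
    {p : ℕ} (hp : p.Prime) (hn : n = p ^ 2) {a b c d : G} (hg : Good p a b c d) :
    p ≠ 2 ∧ b ^ p = 1 ∧ (p = 3 → a ^ p = d⁻¹) ∧ (p ≠ 3 → a ^ p = 1) := by
  let R := presentationKernel G
  have hR : R.Normal := inferInstanceAs (FreeGroup.lift (id : G → G)).ker.Normal
  let N := ⁅(⊤ : Subgroup (FreeGroup G)), R⁆
  have hNR : N ≤ (FreeGroup.lift (id : G → G)).ker := Subgroup.commutator_le_right _ _
  let π : FreeGroup G ⧸ N →* G := QuotientGroup.lift N (FreeGroup.lift (id : G → G)) hNR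
  refine xmain hp π ?_ ?_ ((R ⊓ commutator (FreeGroup G)).map (QuotientGroup.mk' N)) ?_ ?_ ?_ hg
  · intro g
    exact ⟨QuotientGroup.mk (FreeGroup.of g), by simp [π]⟩
  · intro z hz x
    obtain ⟨z, rfl⟩ := QuotientGroup.mk_surjective z
    obtain ⟨x, rfl⟩ := QuotientGroup.mk_surjective x
    have hzR : z ∈ R := hz
    apply pComm_eq_one.mp
    have : pComm (QuotientGroup.mk' N z) (QuotientGroup.mk' N x) = 1 := by
      rw [← map_pComm, ← MonoidHom.mem_ker, QuotientGroup.ker_mk', ← pComm_inv]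
      apply inv_mem
      have := Subgroup.commutator_mem_commutator (Subgroup.mem_top x⁻¹) (R.inv_mem hzR)
      rw [commutatorElement_def, inv_inv, inv_inv] at this
      exact this
    exact this
  · rintro _ ⟨x, hx, rfl⟩
    exact hx.1
  · refine (Subgroup.map_mono inf_le_right).trans ?_
    rw [commutator_def, commutator_def, Subgroup.map_commutator]
    exact Subgroup.commutator_mono le_top le_top
  · rw [← Subgroup.relIndex_ker, QuotientGroup.ker_mk', ← hn, ← hM]
    rfl

end P4

/-- **Theorem (order `p⁴`, `|G'| = p²`).** Let `G` be a group of order `p⁴` with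
`|G'| = p²` and `|M(G)| = p²` (i.e. `s(G) = 2`). Then `G` is isomorphic to
`⟨a,b ∣ a⁹ = b³ = 1, [a,b,a] = 1, [a,b,b] = a⁶, [a,b,b,b] = 1⟩` (with `p = 3`), or to
`⟨a,b ∣ a^p = b^p = 1, [a,b,a] = [a,b,b,a] = [a,b,b,b] = 1⟩` (with `p ≠ 3`). -/
theorem classification_p4_commutator_p_sq {p : ℕ} (hp : p.Prime)
    {G : Type*} [Group G] (hG : Nat.card G = p ^ 4)
    (hG' : Nat.card (commutator G) = p ^ 2)
    (hM : Nat.card (SchurMultiplier G) = p ^ 2) :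
    (p = 3 ∧ Nonempty (G ≃* PresentedGroup relsOrd81)) ∨
    (p ≠ 3 ∧ Nonempty (G ≃* PresentedGroup (relsOrdP4Class3 p))) := by
  have : Fact p.Prime := ⟨hp⟩
  have hfin : Finite G := Nat.finite_of_card_ne_zero (by rw [hG]; exact pow_ne_zero _ hp.ne_zero)
  obtain ⟨a, b, c, d, hg⟩ := P4.exists_good hG hG'
  obtain ⟨h2, hb, h3, h4⟩ := P4.schur_setup hM hp rfl hg
  have e1 : pComm (pComm a b) a = 1 := by
    rw [← hg.hc]; exact P4.pComm_eq_one.mpr hg.ca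
  have e2 : pComm (pComm a b) b = d := by rw [← hg.hc, ← hg.hd]
  have e3 : ∀ x, pComm d x = 1 := fun x => P4.pComm_eq_one.mpr (hg.dz x)
  by_cases hp3 : p = 3
  · left
    refine ⟨hp3, ?_⟩
    subst hp3
    have ha := h3 rfl
    have hd := hg.dp
    have a6 : a ^ 6 = d := by
      rw [show 6 = 3 * 2 from rfl, pow_mul, ha, inv_pow]
      exact inv_eq_of_mul_eq_one_left (by rw [← pow_succ']; exact hd)
    have a9 : a ^ 9 = 1 := by
      rw [show 9 = 3 * 3 from rfl, pow_mul, ha, inv_pow, hd, inv_one]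
    refine P4.iso_of hG _ a b hg.gen ?_ P4.card_81.1 P4.card_81.2
    simp only [relsOrd81, Set.mem_insert_iff, Set.mem_singleton_iff, forall_eq_or_imp,
      forall_eq, map_pow, map_mul, map_inv, P4.map_pComm, FreeGroup.lift_apply_of,
      Matrix.cons_val_zero, Matrix.cons_val_one]
    refine ⟨a9, hb, e1, ?_, ?_⟩
    · rw [e2, a6, mul_inv_cancel]
    · rw [e2, e3]
  · right
    refine ⟨hp3, ?_⟩
    have ha := h4 hp3
    refine P4.iso_of hG _ a b hg.gen ?_ (P4.card_classP hp.pos).1 (P4.card_classP hp.pos).2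
    simp only [relsOrdP4Class3, Set.mem_insert_iff, Set.mem_singleton_iff, forall_eq_or_imp,
      forall_eq, map_pow, P4.map_pComm, FreeGroup.lift_apply_of,
      Matrix.cons_val_zero, Matrix.cons_val_one]
    refine ⟨ha, hb, e1, ?_, ?_⟩
    · rw [e2, e3]
    · rw [e2, e3]
end

section
/- Let p be an odd prime, E_2 the extraspecial p-group of order p^3 and exponent p^2, and n ≥ 3. Then the Schur multiplier of G = E_2 × (ℤ_p)^{n-3} has order p^{(n-1)(n-2)/2 - 1}. -/
/-- `H` is (isomorphic to) `E₂`, the extraspecial group of order `p^3` and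
exponent `p^2`. -/
def IsE₂ (p : ℕ) (H : Type*) [Group H] : Prop :=
  IsExtraspecial p H ∧ Nat.card H = p ^ 3 ∧ Monoid.exponent H = p ^ 2

namespace SchurAux

open scoped commutatorElement

theorem pow_left_comm {Q : Type*} [Group Q] {a b d : Q} (hd : ∀ g, d * g = g * d)
    (h : a * b = d * (b * a)) (n : ℕ) : a ^ n * b = d ^ n * (b * a ^ n) := by
  induction n with
  | zero => simp
  | succ n ih =>
    have hdn : d ^ n * a = a * d ^ n := (Commute.pow_left (hd a) n)
    calc a ^ (n+1) * b = a * (a ^ n * b) := by rw [pow_succ']; group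
      _ = a * d ^ n * (b * a ^ n) := by rw [ih]; group
      _ = d ^ n * (a * b) * a ^ n := by rw [← hdn]; simp only [mul_assoc]
      _ = d ^ n * d * (b * (a * a ^ n)) := by rw [h]; simp only [mul_assoc]
      _ = _ := by rw [pow_succ d, pow_succ' a]

theorem pow_right_comm {Q : Type*} [Group Q] {a b d : Q} (hd : ∀ g, d * g = g * d)
    (h : a * b = d * (b * a)) (n : ℕ) : a * b ^ n = d ^ n * (b ^ n * a) := by
  induction n with
  | zero => simp
  | succ n ih =>
    have hdn : b ^ n * d = d * b ^ n := (hd _).symm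
    calc a * b ^ (n+1) = (a * b ^ n) * b := by rw [pow_succ]; group
      _ = d ^ n * b ^ n * (a * b) := by rw [ih]; simp only [mul_assoc]
      _ = d ^ n * (b ^ n * d) * (b * a) := by rw [h]; simp only [mul_assoc]
      _ = _ := by rw [hdn, pow_succ d, pow_succ b]; simp only [mul_assoc]

theorem mul_pow_class2 {Q : Type*} [Group Q] {a b d : Q} (hd : ∀ g, d * g = g * d)
    (h : a * b = d * (b * a)) (n : ℕ) : (a * b) ^ n * d ^ (n.choose 2) = a ^ n * b ^ n := by
  induction n with
  | zero => simp
  | succ n ih =>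
    have hdc : ∀ k g, d ^ k * g = g * d ^ k := fun k g => Commute.pow_left (hd g) k
    have e := pow_right_comm hd h n
    have hch : (n+1).choose 2 = n.choose 2 + n := by
      rw [Nat.choose_succ_succ' n 1, Nat.choose_one_right, add_comm]
    calc (a * b) ^ (n+1) * d ^ ((n+1).choose 2)
        = (a * b) ^ n * ((a * b) * d ^ (n.choose 2)) * d ^ n := by
          rw [hch, pow_succ, pow_add]; simp only [mul_assoc]
      _ = ((a * b) ^ n * d ^ (n.choose 2)) * (a * b) * d ^ n := by
          rw [← hdc (n.choose 2) (a * b)]; simp only [mul_assoc]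
      _ = a ^ n * (b ^ n * a * b * d ^ n) := by rw [ih]; simp only [mul_assoc]
      _ = a ^ n * (d ^ n * (b ^ n * a)) * b := by rw [← hdc]; simp only [mul_assoc]
      _ = a ^ (n+1) * b ^ (n+1) := by rw [← e, pow_succ a, pow_succ b]; simp only [mul_assoc]

/-- Upper bound for the derived subgroup. -/
theorem commutator_card_dvd {Q : Type*} [Group Q] {m p : ℕ} (g : Fin m → Q)
    (hgen : Subgroup.closure (Set.range g ∪ (Subgroup.center Q : Set Q)) = ⊤)
    (hc : ∀ i j, ⁅g i, g j⁆ ∈ Subgroup.center Q)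
    (hpow : ∀ i, g i ^ p ∈ Subgroup.center Q) :
    Nat.card (commutator Q) ∣ p ^ (m.choose 2) := by
  classical
  let f : (Σ j : Fin m, Fin j) → Q := fun x => ⁅g ⟨x.2, x.2.2.trans x.1.2⟩, g x.1⁆
  let T : Finset Q := Finset.univ.image f
  let S : Subgroup Q := Subgroup.closure (T : Set Q)
  have hTc : (T : Set Q) ⊆ Subgroup.center Q := by
    intro t ht
    simp only [T, Finset.coe_image, Set.mem_image] at ht
    obtain ⟨x, -, rfl⟩ := ht
    exact hc _ _
  have hSc : S ≤ Subgroup.center Q := (Subgroup.closure_le _).2 hTc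
  have hSn : S.Normal := ⟨fun n hn q => by
    have := Subgroup.mem_center_iff.1 (hSc hn) q
    rw [this]; simpa using hn⟩
  -- commutators lie in S
  have hij : ∀ i j, ⁅g i, g j⁆ ∈ S := by
    have key : ∀ i j : Fin m, i < j → ⁅g i, g j⁆ ∈ S := by
      intro i j h
      apply Subgroup.subset_closure
      simp only [T, Finset.coe_image, Set.mem_image]
      exact ⟨⟨j, ⟨i, h⟩⟩, by simp, rfl⟩
    intro i j
    rcases lt_trichotomy i j with h | h | h
    · exact key i j h
    · subst h; simp
    · rw [← commutatorElement_inv]; exact S.inv_mem (key j i h)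
  have hle : commutator Q ≤ S := by
    rw [← Subgroup.Normal.quotient_commutative_iff_commutator_le]
    have hcl : Subgroup.closure ((QuotientGroup.mk' S) '' (Set.range g ∪ (Subgroup.center Q : Set Q))) = ⊤ := by
      rw [← MonoidHom.map_closure, hgen, ← MonoidHom.range_eq_map, MonoidHom.range_eq_top]
      exact QuotientGroup.mk'_surjective S
    have hcomm : ∀ x ∈ ((QuotientGroup.mk' S) '' (Set.range g ∪ (Subgroup.center Q : Set Q))),
        ∀ y ∈ ((QuotientGroup.mk' S) '' (Set.range g ∪ (Subgroup.center Q : Set Q))),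
        x * y = y * x := by
      rintro _ ⟨x, hx, rfl⟩ _ ⟨y, hy, rfl⟩
      rw [← commutatorElement_eq_one_iff_mul_comm, ← map_commutatorElement]
      rw [← MonoidHom.mem_ker, QuotientGroup.ker_mk']
      rcases hx with ⟨i, rfl⟩ | hx
      · rcases hy with ⟨j, rfl⟩ | hy
        · exact hij i j
        · rw [commutatorElement_eq_one_iff_mul_comm.2 (Subgroup.mem_center_iff.1 hy _)]
          exact S.one_mem
      · rw [commutatorElement_eq_one_iff_mul_comm.2 (Subgroup.mem_center_iff.1 hx _).symm]
        exact S.one_mem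
    refine ⟨⟨fun a b => ?_⟩⟩
    have ha : a ∈ Subgroup.closure ((QuotientGroup.mk' S) '' (Set.range g ∪ (Subgroup.center Q : Set Q))) := by
      rw [hcl]; trivial
    have hb : b ∈ Subgroup.closure ((QuotientGroup.mk' S) '' (Set.range g ∪ (Subgroup.center Q : Set Q))) := by
      rw [hcl]; trivial
    have := (Subgroup.isMulCommutative_closure hcomm).is_comm.comm ⟨a, ha⟩ ⟨b, hb⟩
    exact congrArg Subtype.val this
  have hpS : ∀ s ∈ S, s ^ p = 1 := by
    intro s hs
    induction hs using Subgroup.closure_induction with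
    | mem x hx =>
      simp only [T, Finset.coe_image, Set.mem_image] at hx
      obtain ⟨⟨j, i⟩, -, rfl⟩ := hx
      simp only [f]
      set a := g ⟨i, i.2.trans j.2⟩ with ha
      set b := g j
      have hd : ∀ q, ⁅a, b⁆ * q = q * ⁅a, b⁆ := fun q => (Subgroup.mem_center_iff.1 (hc _ _) q).symm
      have e := pow_left_comm hd (a := a) (b := b) (by rw [commutatorElement_def]; group) p
      rw [← Subgroup.mem_center_iff.1 (hpow _) b] at e
      exact (right_eq_mul.1 e)
    | one => simp
    | mul x y hx hy ihx ihy =>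
      have : Commute x y := Subgroup.mem_center_iff.1 (hSc hy) x
      rw [this.mul_pow, ihx, ihy, one_mul]
    | inv x hx ih => rw [inv_pow, ih, inv_one]
  have hST : T.card ≤ m.choose 2 := by
    refine Finset.card_image_le.trans ?_
    rw [Finset.card_univ, Fintype.card_sigma]
    simp only [Fintype.card_fin]
    rw [← Finset.sum_range (fun i => i), Finset.sum_range_id, Nat.choose_two_right]
  have hSd : Nat.card S ∣ p ^ (m.choose 2) := by
    let _ : CommGroup S := { (inferInstance : Group S) with
      mul_comm := fun a b => Subtype.ext (Subgroup.mem_center_iff.1 (hSc b.2) a) }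
    have hr := Subgroup.rank_closure_finset_le_card T
    have h1 := card_dvd_exponent_pow_rank' S (n := p) (fun s => Subtype.ext (hpS s s.2))
    refine h1.trans (pow_dvd_pow _ (le_trans ?_ hST))
    exact hr
  exact (Subgroup.card_dvd_of_le hle).trans hSd

theorem E_struct {p : ℕ} (hp : p.Prime) {E : Type*} [Group E] (hE : IsE₂ p E) :
    Finite E ∧ ∃ x y : E, Subgroup.closure {x, y} = ⊤ ∧ (∀ e : E, e ^ p ∈ Subgroup.center E) ∧
      (∀ z ∈ Subgroup.center E, ∃ j : ℤ, (x ^ p) ^ j = z) ∧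
      (∀ z ∈ Subgroup.center E, z ^ p = 1) ∧ ⁅x, y⁆ ∈ Subgroup.center E := by
  have : Fact p.Prime := ⟨hp⟩
  obtain ⟨⟨hZ, -, hcZ⟩, hcard, hexp⟩ := hE
  have hfin : Finite E := Nat.finite_of_card_ne_zero (by rw [hcard]; exact pow_ne_zero _ hp.ne_zero)
  refine ⟨hfin, ?_⟩
  have hnc : ¬ (∀ a b : E, a * b = b * a) := by
    intro h
    have : Subgroup.center E = ⊤ := by
      rw [eq_top_iff]; intro a _; rw [Subgroup.mem_center_iff]; intro b; exact h b a
    rw [this, Subgroup.card_top, hcard] at hcZ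
    have : p ^ 1 < p ^ 3 := Nat.pow_lt_pow_right hp.one_lt (by norm_num)
    rw [pow_one] at this
    omega
  have hcQ : Nat.card (E ⧸ Subgroup.center E) = p ^ 2 := by
    have h := Subgroup.card_eq_card_quotient_mul_card_subgroup (Subgroup.center E)
    rw [hcard, hcZ, pow_succ p 2] at h
    exact (Nat.eq_of_mul_eq_mul_right hp.pos h).symm
  have hpow : ∀ e : E, e ^ p ∈ Subgroup.center E := by
    intro e
    have h1 : orderOf (e : E ⧸ Subgroup.center E) ∣ p ^ 2 := hcQ ▸ orderOf_dvd_natCard _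
    obtain ⟨i, hi, hi'⟩ := (Nat.dvd_prime_pow hp).1 h1
    have hi2 : i ≠ 2 := by
      rintro rfl
      have hcyc : IsCyclic (E ⧸ Subgroup.center E) :=
        isCyclic_of_orderOf_eq_card _ (hi'.trans hcQ.symm)
      have := MonoidHom.isMulCommutative_of_isCyclic_of_ker_le_center
        (QuotientGroup.mk' (Subgroup.center E)) (by rw [QuotientGroup.ker_mk'])
      exact hnc this.is_comm.comm
    have h2 : (e : E ⧸ Subgroup.center E) ^ p = 1 := by
      apply orderOf_dvd_iff_pow_eq_one.1
      rw [hi']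
      calc p ^ i ∣ p ^ 1 := pow_dvd_pow _ (by omega)
        _ = p := pow_one p
    rw [← QuotientGroup.eq_one_iff]
    exact_mod_cast h2
  have hzp : ∀ z ∈ Subgroup.center E, z ^ p = 1 := by
    intro z hz
    have : (⟨z, hz⟩ : Subgroup.center E) ^ p = 1 := by rw [← hcZ]; exact pow_card_eq_one'
    exact congrArg Subtype.val this
  obtain ⟨x, hx⟩ : ∃ x : E, x ^ p ≠ 1 := by
    by_contra! h
    have := Monoid.exponent_dvd_of_forall_pow_eq_one h
    rw [hexp] at this
    have h3 := Nat.le_of_dvd hp.pos this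
    have : p ^ 1 < p ^ 2 := Nat.pow_lt_pow_right hp.one_lt (by norm_num)
    rw [pow_one] at this
    omega
  have hxZ : x ∉ Subgroup.center E := fun h => hx (hzp x h)
  obtain ⟨y, hy⟩ : ∃ y, y * x ≠ x * y := by
    by_contra! h
    exact hxZ (Subgroup.mem_center_iff.2 h)
  refine ⟨x, y, ?_, hpow, ?_, hzp, ?_⟩
  · set K := Subgroup.closure {x, y} with hK
    have hxK : x ∈ K := Subgroup.subset_closure (by simp)
    have hyK : y ∈ K := Subgroup.subset_closure (by simp)
    have hd : Nat.card K ∣ p ^ 3 := hcard ▸ Subgroup.card_subgroup_dvd_card K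
    obtain ⟨i, hi, hi'⟩ := (Nat.dvd_prime_pow hp).1 hd
    have hKnc : ¬ IsMulCommutative K := by
      intro h
      exact hy (congrArg Subtype.val (h.is_comm.comm (⟨y, hyK⟩ : K) ⟨x, hxK⟩))
    have h3 : i = 3 := by
      by_contra h3
      apply hKnc
      by_cases h2 : i = 2
      · subst h2; exact IsPGroup.isMulCommutative_of_card_eq_prime_sq hi'
      · have : IsCyclic K := isCyclic_of_card_dvd_prime (p := p) (by
          rw [hi']
          calc p ^ i ∣ p ^ 1 := pow_dvd_pow _ (by omega)
            _ = p := pow_one p)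
        infer_instance
    apply Subgroup.eq_top_of_card_eq
    rw [hi', h3, hcard]
  · intro z hz
    have h := mem_zpowers_of_prime_card hcZ (g := ⟨x ^ p, hpow x⟩) (g' := ⟨z, hz⟩)
      (fun h => hx (congrArg Subtype.val h))
    obtain ⟨j, hj⟩ := h
    exact ⟨j, congrArg Subtype.val hj⟩
  · rw [hZ]
    exact Subgroup.commutator_mem_commutator trivial trivial

theorem mem_center_of_gens {Q : Type*} [Group Q] {s : Set Q}
    (hs : Subgroup.closure (s ∪ (Subgroup.center Q : Set Q)) = ⊤) {c : Q}
    (h : ∀ a ∈ s, a * c = c * a) : c ∈ Subgroup.center Q := by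
  have : Subgroup.closure (s ∪ (Subgroup.center Q : Set Q)) ≤ Subgroup.centralizer {c} := by
    rw [Subgroup.closure_le]
    rintro a (ha | ha)
    · exact Subgroup.mem_centralizer_singleton_iff.2 (h a ha)
    · exact Subgroup.mem_centralizer_singleton_iff.2 (Subgroup.mem_center_iff.1 ha c).symm
  rw [hs] at this
  exact Subgroup.mem_center_iff.2 fun g =>
    Subgroup.mem_centralizer_singleton_iff.1 (this (Subgroup.mem_top g))

theorem upper {p k : ℕ} (hp : p.Prime) (hodd : Odd p) {E : Type*} [Group E] (hE : IsE₂ p E)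
    {Q : Type*} [Group Q] (q : Q →* E × (Fin k → Multiplicative (ZMod p)))
    (hq : Function.Surjective q) (hker : ∀ a, q a = 1 → a ∈ Subgroup.center Q) :
    Nat.card (commutator Q) ∣ p ^ ((k + 2).choose 2) := by
  have : Fact p.Prime := ⟨hp⟩
  obtain ⟨hfin, x, y, hxy, hpow, hzx, hzp, hcz⟩ := E_struct hp hE
  have hVp : ∀ v : Fin k → Multiplicative (ZMod p), v ^ p = 1 := by
    intro v; ext i
    simp only [Pi.pow_apply, Pi.one_apply]
    rw [← ofAdd_toAdd (v i), ← ofAdd_nsmul]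
    simp
  obtain ⟨X, hX⟩ := hq (x, 1)
  obtain ⟨Y, hY⟩ := hq (y, 1)
  choose Z hZ using fun i : Fin k => hq (1, Pi.mulSingle i (Multiplicative.ofAdd 1))
  let g : Fin (k + 2) → Q := Fin.cons X (Fin.cons Y Z)
  have hg0 : g 0 = X := rfl
  have hg1 : g 1 = Y := rfl
  have hg2 : ∀ i : Fin k, g i.succ.succ = Z i := fun i => rfl
  have hrange : Set.range g = {X, Y} ∪ Set.range Z := by
    simp only [g, Fin.range_cons]
    ext a; simp [or_assoc]
  have hgen : Subgroup.closure (Set.range g ∪ (Subgroup.center Q : Set Q)) = ⊤ := by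
    set K := Subgroup.closure (Set.range g ∪ (Subgroup.center Q : Set Q)) with hK
    have hgK : ∀ i, g i ∈ K := fun i => Subgroup.subset_closure (Or.inl ⟨i, rfl⟩)
    have hmap : K.map q = ⊤ := by
      have h1 : ∀ e : E, ((e, 1) : E × (Fin k → Multiplicative (ZMod p))) ∈ K.map q := by
        intro e
        have : Subgroup.closure {x, y} ≤ (K.map q).comap (MonoidHom.inl E _) := by
          rw [Subgroup.closure_le]
          rintro a (rfl | rfl)
          · exact ⟨X, hgK 0, hX⟩
          · exact ⟨Y, hgK 1, hY⟩
        rw [hxy] at this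
        exact this (Subgroup.mem_top e)
      have h2 : ∀ v, ((1, v) : E × (Fin k → Multiplicative (ZMod p))) ∈ K.map q := by
        intro v
        have hmem : v ∈ (K.map q).comap (MonoidHom.inr E _) := by
          rw [← Finset.univ_prod_mulSingle v]
          refine Subgroup.prod_mem _ fun i _ => ?_
          have : (Pi.mulSingle i (v i) : Fin k → Multiplicative (ZMod p)) =
              (Pi.mulSingle i (Multiplicative.ofAdd 1)) ^ (Multiplicative.toAdd (v i)).val := by
            rw [← Pi.mulSingle_pow, ← ofAdd_nsmul]
            simp
          rw [this]
          refine Subgroup.pow_mem _ ?_ _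
          exact ⟨Z i, hgK i.succ.succ, hZ i⟩
        exact hmem
      rw [eq_top_iff]
      rintro ⟨e, v⟩ -
      have := (K.map q).mul_mem (h1 e) (h2 v)
      simpa using this
    rw [eq_top_iff]
    intro a _
    have : q a ∈ K.map q := by rw [hmap]; trivial
    obtain ⟨b, hb, hba⟩ := this
    have h3 : b⁻¹ * a ∈ K := Subgroup.subset_closure (Or.inr (hker _ (by simp [hba])))
    have := K.mul_mem hb h3
    simpa using this
  have hcomm_of : ∀ a b, q a * q b = q b * q a → ⁅a, b⁆ ∈ Subgroup.center Q := by
    intro a b h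
    apply hker
    rw [map_commutatorElement, commutatorElement_eq_one_iff_mul_comm, h]
  have hcen : ∀ {c : Q}, X * c = c * X → Y * c = c * Y → (∀ i, Z i * c = c * Z i) →
      c ∈ Subgroup.center Q := by
    intro c h1 h2 h3
    refine mem_center_of_gens hgen ?_
    rw [hrange]
    rintro a ((rfl | rfl) | ⟨i, rfl⟩)
    exacts [h1, h2, h3 i]
  have hcent : ∀ {c : Q}, c ∈ Subgroup.center Q → ∀ a, c * a = a * c :=
    fun h a => (Subgroup.mem_center_iff.1 h a).symm
  -- elements over the centre of E are powers of X^p up to central elements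
  have hlift : ∀ c : Q, (q c).1 ∈ Subgroup.center E → (q c).2 = 1 →
      ∃ j : ℤ, ∃ r ∈ Subgroup.center Q, c = (X ^ p) ^ j * r := by
    intro c hc h1
    obtain ⟨j, hj⟩ := hzx _ hc
    refine ⟨j, ((X ^ p) ^ j)⁻¹ * c, hker _ ?_, by group⟩
    rw [map_mul, map_inv, map_zpow, map_pow, hX]
    ext1
    · simp [← hj]
    · simp [h1]
  set C := ⁅X, Y⁆ with hC
  have hXY : X * Y = C * (Y * X) := by rw [hC, commutatorElement_def]; group
  have hqC1 : (q C).1 = ⁅x, y⁆ := by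
    rw [hC, map_commutatorElement, hX, hY]; rfl
  have hqC2 : (q C).2 = 1 := by
    rw [hC, map_commutatorElement, hX, hY]
    simp [commutatorElement_def]
  obtain ⟨j, r, hr, hCj⟩ := hlift C (hqC1 ▸ hcz) hqC2
  have hYp1 : (q (Y ^ p)).1 ∈ Subgroup.center E := by
    rw [map_pow, hY]; exact hpow y
  obtain ⟨t, r', hr', hYt⟩ := hlift (Y ^ p) hYp1 (by rw [map_pow, hY]; simp)
  -- transfer commutation with X^p
  have htr : ∀ a : Q, ∀ j : ℤ, ∀ r ∈ Subgroup.center Q, Commute a (X ^ p) →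
      Commute a ((X ^ p) ^ j * r) := by
    intro a j r hr h
    exact (h.zpow_right j).mul_right (Subgroup.mem_center_iff.1 hr a)
  have hXXp : Commute X (X ^ p) := (Commute.refl X).pow_right p
  have hXC : Commute X C := by rw [hCj]; exact htr X j r hr hXXp
  have hXYp : Commute X (Y ^ p) := by rw [hYt]; exact htr X t r' hr' hXXp
  -- C ^ p central
  have hCp : C ^ p ∈ Subgroup.center Q := by
    apply hker
    rw [map_pow]
    ext1
    · rw [Prod.pow_fst, hqC1]; exact hzp _ hcz
    · rw [Prod.pow_snd, hqC2]; simp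
  set D := ⁅C, Y⁆ with hD
  have hDc : D ∈ Subgroup.center Q := by
    apply hcomm_of
    ext1
    · rw [Prod.fst_mul, Prod.fst_mul, hqC1]
      exact (Subgroup.mem_center_iff.1 hcz _).symm
    · rw [Prod.snd_mul, Prod.snd_mul, mul_comm]
  have hCY : C * Y = D * (Y * C) := by rw [hD, commutatorElement_def]; group
  have hDp : D ^ p = 1 := by
    have e := pow_left_comm (hcent hDc) hCY p
    rw [hcent hCp Y] at e
    exact right_eq_mul.1 e
  have hCp1 : C ^ p = 1 := by
    have e := mul_pow_class2 (hcent hDc) hCY p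
    have h2 : 2 < p := lt_of_le_of_ne hp.two_le (by rintro rfl; exact absurd hodd (by decide))
    obtain ⟨s, hs⟩ := hp.dvd_choose_self (k := 2) (by norm_num) h2
    rw [hs, pow_mul, hDp, one_pow, mul_one] at e
    have h3 : C * Y = X * Y * X⁻¹ := by rw [hXY]; group
    rw [h3, conj_pow, hXYp.eq, mul_inv_cancel_right] at e
    exact right_eq_mul.1 e
  have hXpY : Commute Y (X ^ p) := by
    -- X^n Y = C^n Y X^n
    have : ∀ n : ℕ, X ^ n * Y = C ^ n * (Y * X ^ n) := by
      intro n
      induction n with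
      | zero => simp
      | succ n ih =>
        calc X ^ (n+1) * Y = X * (X ^ n * Y) := by rw [pow_succ']; simp only [mul_assoc]
          _ = (X * C ^ n) * (Y * X ^ n) := by rw [ih]; simp only [mul_assoc]
          _ = C ^ n * (X * Y) * X ^ n := by rw [(hXC.pow_right n).eq]; simp only [mul_assoc]
          _ = _ := by rw [hXY, pow_succ C, pow_succ' X]; simp only [mul_assoc]
    have e := this p
    rw [hCp1, one_mul] at e
    exact e.symm
  have hXpZ : ∀ i, Commute (Z i) (X ^ p) := by
    intro i
    have hd := hcomm_of X (Z i) (by rw [hX, hZ]; simp)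
    have h1 : X * Z i = ⁅X, Z i⁆ * (Z i * X) := by rw [commutatorElement_def]; group
    have e1 := pow_left_comm (hcent hd) h1 p
    have e2 := pow_right_comm (hcent hd) h1 p
    have hZp : Z i ^ p ∈ Subgroup.center Q := by
      apply hker
      rw [map_pow, hZ]
      ext1
      · simp
      · exact hVp _
    rw [hcent hZp X] at e2
    have e3 : ⁅X, Z i⁆ ^ p = 1 := right_eq_mul.1 e2
    rw [e3, one_mul] at e1
    exact e1.symm
  have hXpc : X ^ p ∈ Subgroup.center Q := hcen hXXp hXpY hXpZ
  have hCc : C ∈ Subgroup.center Q := by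
    rw [hCj]; exact mul_mem (zpow_mem hXpc j) hr
  refine commutator_card_dvd g hgen ?_ ?_
  · have hZc : ∀ (i : Fin k) a, q (Z i) * q a = q a * q (Z i) := by
      intro i a
      rw [hZ]; ext1
      · simp
      · exact mul_comm _ _
    intro i j
    refine Fin.cases ?_ (fun i => Fin.cases ?_ (fun i => ?_) i) i
    · refine Fin.cases ?_ (fun j => Fin.cases ?_ (fun j => ?_) j) j
      · simp [one_mem]
      · exact hCc
      · exact hcomm_of _ _ (hZc j _).symm
    · refine Fin.cases ?_ (fun j => Fin.cases ?_ (fun j => ?_) j) j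
      · rw [← commutatorElement_inv]; exact inv_mem hCc
      · simp [one_mem]
      · exact hcomm_of _ _ (hZc j _).symm
    · exact hcomm_of _ _ (hZc i _)
  · intro i
    refine Fin.cases ?_ (fun i => Fin.cases ?_ (fun i => ?_) i) i
    · exact hXpc
    · change Y ^ p ∈ _
      rw [hYt]; exact mul_mem (zpow_mem hXpc t) hr'
    · change Z i ^ p ∈ _
      apply hker
      rw [map_pow, hZ]
      ext1
      · simp
      · exact hVp _

/-- The index type of pairs. -/
abbrev Prs (m : ℕ) : Type := Σ j : Fin m, Fin j

/-- A class two group with derived subgroup of rank `m choose 2`. -/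
@[ext] structure Heis (p m : ℕ) where
  v : Fin m → ZMod p
  w : Prs m → ZMod p

/-- The cocycle. -/
def bet {p m : ℕ} (a b : Fin m → ZMod p) : Prs m → ZMod p :=
  fun x => a ⟨x.2, x.2.2.trans x.1.2⟩ * b x.1

theorem bet_add_left {p m : ℕ} (a a' b : Fin m → ZMod p) :
    bet (a + a') b = bet a b + bet a' b := by
  ext x; simp [bet, add_mul]

theorem bet_add_right {p m : ℕ} (a b b' : Fin m → ZMod p) :
    bet a (b + b') = bet a b + bet a b' := by
  ext x; simp [bet, mul_add]

theorem bet_zero_left {p m : ℕ} (b : Fin m → ZMod p) : bet 0 b = 0 := by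
  ext x; simp [bet]

theorem bet_zero_right {p m : ℕ} (b : Fin m → ZMod p) : bet b 0 = 0 := by
  ext x; simp [bet]

theorem bet_neg_left {p m : ℕ} (a b : Fin m → ZMod p) : bet (-a) b = - bet a b := by
  ext x; simp [bet]

instance {p m : ℕ} : Mul (Heis p m) := ⟨fun a b => ⟨a.v + b.v, a.w + b.w + bet a.v b.v⟩⟩
instance {p m : ℕ} : One (Heis p m) := ⟨⟨0, 0⟩⟩
instance {p m : ℕ} : Inv (Heis p m) := ⟨fun a => ⟨-a.v, -a.w + bet a.v a.v⟩⟩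

theorem Heis.mul_v {p m : ℕ} (a b : Heis p m) : (a * b).v = a.v + b.v := rfl
theorem Heis.mul_w {p m : ℕ} (a b : Heis p m) : (a * b).w = a.w + b.w + bet a.v b.v := rfl
theorem Heis.one_v {p m : ℕ} : (1 : Heis p m).v = 0 := rfl
theorem Heis.one_w {p m : ℕ} : (1 : Heis p m).w = 0 := rfl
theorem Heis.inv_v {p m : ℕ} (a : Heis p m) : (a⁻¹).v = - a.v := rfl
theorem Heis.inv_w {p m : ℕ} (a : Heis p m) : (a⁻¹).w = - a.w + bet a.v a.v := rfl

instance {p m : ℕ} : Group (Heis p m) := Group.ofLeftAxioms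
  (by
    intro a b c
    apply Heis.ext
    · simp only [Heis.mul_v, add_assoc]
    · simp only [Heis.mul_v, Heis.mul_w, bet_add_left, bet_add_right]; abel)
  (by
    intro a
    apply Heis.ext
    · simp only [Heis.mul_v, Heis.one_v, zero_add]
    · simp only [Heis.mul_w, Heis.one_w, Heis.one_v, bet_zero_left]; abel)
  (by
    intro a
    apply Heis.ext
    · simp only [Heis.mul_v, Heis.one_v, Heis.inv_v, neg_add_cancel]
    · simp only [Heis.mul_w, Heis.one_w, Heis.inv_v, Heis.inv_w, bet_neg_left]; abel)

theorem Heis.comm {p m : ℕ} (a b : Heis p m) : ⁅a, b⁆ = ⟨0, bet a.v b.v - bet b.v a.v⟩ := by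
  have : a * b = ⟨0, bet a.v b.v - bet b.v a.v⟩ * (b * a) := by
    apply Heis.ext
    · rw [Heis.mul_v, Heis.mul_v, Heis.mul_v]; simp only [zero_add]; exact add_comm _ _
    · simp only [Heis.mul_w, bet_zero_left]; abel
  rw [commutatorElement_def, this]; group

/-- Projection. -/
def Heis.pr {p m : ℕ} : Heis p m →* Multiplicative (Fin m → ZMod p) where
  toFun a := Multiplicative.ofAdd a.v
  map_one' := rfl
  map_mul' _ _ := rfl

/-- Central inclusion. -/
def Heis.inc {p m : ℕ} : Multiplicative (Prs m → ZMod p) →* Heis p m where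
  toFun a := ⟨0, Multiplicative.toAdd a⟩
  map_one' := rfl
  map_mul' a b := by
    apply Heis.ext
    · simp [Heis.mul_v]
    · simp [Heis.mul_w, bet_zero_left]

theorem card_prs (m : ℕ) : Fintype.card (Prs m) = m.choose 2 := by
  rw [Fintype.card_sigma]
  simp only [Fintype.card_fin]
  rw [← Finset.sum_range (fun i => i), Finset.sum_range_id, Nat.choose_two_right]

theorem lower {p m : ℕ} (hp : p.Prime) {G : Type*} [Group G]
    (π : G →* Multiplicative (Fin m → ZMod p)) (hπ : Function.Surjective π)
    (hne : (⁅(⊤ : Subgroup (FreeGroup G)), presentationKernel G⁆).relIndex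
      (commutator (FreeGroup G)) ≠ 0) :
    p ^ (m.choose 2) ≤ (⁅(⊤ : Subgroup (FreeGroup G)), presentationKernel G⁆).relIndex
      (commutator (FreeGroup G)) := by
  have : Fact p.Prime := ⟨hp⟩
  let Φ : FreeGroup G →* Heis p m :=
    FreeGroup.lift (fun g => ⟨Multiplicative.toAdd (π g), 0⟩)
  have hΦv : ∀ f, (Φ f).v = Multiplicative.toAdd (π (FreeGroup.lift (id : G → G) f)) := by
    have : Heis.pr.comp Φ = π.comp (FreeGroup.lift (id : G → G)) := by
      ext g
      simp [Φ, Heis.pr]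
    intro f
    exact congrArg Multiplicative.toAdd (DFunLike.congr_fun this f)
  have hle : ⁅(⊤ : Subgroup (FreeGroup G)), presentationKernel G⁆ ≤ Φ.ker := by
    rw [Subgroup.commutator_le]
    intro a _ r hr
    have hr' : FreeGroup.lift (id : G → G) r = 1 := hr
    have h0 : (Φ r).v = 0 := by rw [hΦv, hr', map_one]; rfl
    rw [MonoidHom.mem_ker, map_commutatorElement, Heis.comm, h0, bet_zero_left, bet_zero_right]
    apply Heis.ext
    · rfl
    · simp [Heis.one_w]
  have hdvd := Subgroup.relIndex_dvd_of_le_left (commutator (FreeGroup G)) hle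
  rw [Subgroup.relIndex_ker] at hdvd
  refine le_trans ?_ (Nat.le_of_dvd (Nat.pos_of_ne_zero hne) hdvd)
  set L := Subgroup.map Φ (commutator (FreeGroup G)) with hL
  have hsurj : ∀ v : Fin m → ZMod p, ∃ f, (Φ f).v = v := by
    intro v
    obtain ⟨g, hg⟩ := hπ (Multiplicative.ofAdd v)
    exact ⟨FreeGroup.of g, by rw [hΦv]; simp [hg]⟩
  have hsing : ∀ x : Prs m, (⟨0, Pi.single x 1⟩ : Heis p m) ∈ L := by
    rintro ⟨j, i⟩
    obtain ⟨a, ha⟩ := hsurj (Pi.single ⟨i, i.2.trans j.2⟩ 1)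
    obtain ⟨b, hb⟩ := hsurj (Pi.single j 1)
    refine ⟨⁅a, b⁆, Subgroup.commutator_mem_commutator trivial trivial, ?_⟩
    rw [map_commutatorElement, Heis.comm, ha, hb]
    congr 1
    ext ⟨j', i'⟩
    simp only [Pi.sub_apply, bet, Pi.single_apply]
    have hi := i.2
    have hi' := i'.2
    by_cases h : (⟨j', i'⟩ : Prs m) = ⟨j, i⟩
    · cases h
      have : (⟨i, i.2.trans j.2⟩ : Fin m) ≠ j := by
        intro h; have := congrArg Fin.val h; simp at this; omega
      simp [this]
    · have h1 : ¬ ((⟨i', i'.2.trans j'.2⟩ : Fin m) = ⟨i, i.2.trans j.2⟩ ∧ j' = j) := by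
        rintro ⟨h1, rfl⟩
        apply h
        have := congrArg Fin.val h1
        simp only at this
        rw [Fin.ext this]
      have h2 : ¬ ((⟨i', i'.2.trans j'.2⟩ : Fin m) = j ∧ j' = ⟨i, i.2.trans j.2⟩) := by
        rintro ⟨h1, h2⟩
        have e1 := congrArg Fin.val h1
        have e2 := congrArg Fin.val h2
        simp only at e1 e2
        omega
      have hmul : ∀ (P P' : Prop) [Decidable P] [Decidable P'], ¬ (P ∧ P') →
          (if P then (1 : ZMod p) else 0) * (if P' then 1 else 0) = 0 := by
        intro P P' _ _ hPP
        by_cases hP : P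
        · rw [if_neg (fun hP' => hPP ⟨hP, hP'⟩), mul_zero]
        · rw [if_neg hP, zero_mul]
      rw [if_neg h, hmul _ _ h1, hmul _ _ h2, sub_zero]
  have hinc : ∀ w : Multiplicative (Prs m → ZMod p), Heis.inc w ∈ L := by
    intro w
    have : w ∈ L.comap Heis.inc := by
      have e : w = ∏ x : Prs m, (Multiplicative.ofAdd (Pi.single x (1 : ZMod p))) ^
          (Multiplicative.toAdd w x).val := by
        apply Multiplicative.toAdd.injective
        rw [toAdd_prod]
        simp only [toAdd_pow, toAdd_ofAdd]
        ext y
        simp only [Finset.sum_apply, Pi.smul_apply, Pi.single_apply]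
        simp
      rw [e]
      refine Subgroup.prod_mem _ fun x _ => Subgroup.pow_mem _ ?_ _
      exact hsing x
    exact this
  have hfinL : Finite L := by
    apply Nat.finite_of_card_ne_zero
    intro h0
    rw [h0, zero_dvd_iff] at hdvd
    exact hne hdvd
  have hinj : Function.Injective
      (fun w : Multiplicative (Prs m → ZMod p) => (⟨Heis.inc w, hinc w⟩ : L)) := by
    intro a b h
    have h1 := congrArg Heis.w (congrArg Subtype.val h)
    exact Multiplicative.toAdd.injective h1
  have hc := Nat.card_le_card_of_injective _ hinj
  refine le_trans (le_of_eq ?_) hc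
  rw [Nat.card_congr Multiplicative.toAdd, Nat.card_fun]
  simp [card_prs, -Fintype.card_sigma]

theorem elementary_aux {p m : ℕ} [Fact p.Prime] {V : Type*} [AddCommGroup V] [Module (ZMod p) V]
    [Finite V] (hc : Nat.card V = p ^ m) : Nonempty (V ≃+ (Fin m → ZMod p)) := by
  have hp : p.Prime := Fact.out
  have := Fintype.ofFinite V
  have hfr : Module.finrank (ZMod p) V = m := by
    have h := Module.card_eq_pow_finrank (K := ZMod p) (V := V)
    rw [ZMod.card, ← Nat.card_eq_fintype_card, hc] at h
    exact (Nat.pow_right_injective hp.two_le h).symm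
  exact ⟨(Module.finBasisOfFinrankEq (ZMod p) V hfr).equivFun.toAddEquiv⟩

theorem elementary {p m : ℕ} (hp : p.Prime) {B : Type*} [CommGroup B]
    (hB : ∀ b : B, b ^ p = 1) (hc : Nat.card B = p ^ m) :
    ∃ π : B →* Multiplicative (Fin m → ZMod p), Function.Surjective π := by
  have : Fact p.Prime := ⟨hp⟩
  have hfin : Finite B := Nat.finite_of_card_ne_zero (by rw [hc]; exact pow_ne_zero _ hp.ne_zero)
  let _ : Module (ZMod p) (Additive B) :=
    AddCommGroup.zmodModule (fun x => by
      apply Additive.toMul.injective; rw [toMul_nsmul]; exact hB _)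
  obtain ⟨e⟩ := elementary_aux (p := p) (m := m) (V := Additive B)
    ((Nat.card_congr Additive.toMul).trans hc)
  exact ⟨AddMonoidHom.toMultiplicativeRight e.toAddMonoidHom, fun v => by
    obtain ⟨a, ha⟩ := e.surjective (Multiplicative.toAdd v)
    exact ⟨Additive.toMul a, congrArg Multiplicative.ofAdd ha⟩⟩

end SchurAux

open scoped commutatorElement in
/-- The Schur multiplier of `E₂ × ℤ_p^(n-3)` (`p` odd, `n ≥ 3`) has order
`p^((n-1)(n-2)/2 - 1)`. -/
theorem schurMultiplier_E₂_times_elementary {p n : ℕ} (hp : p.Prime) (hodd : Odd p)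
    (hn : 3 ≤ n) {E : Type*} [Group E] (hE : IsE₂ p E) :
    Nat.card (SchurMultiplier (E × (Fin (n - 3) → Multiplicative (ZMod p)))) =
      p ^ ((n - 1) * (n - 2) / 2 - 1) := by
  have : Fact p.Prime := ⟨hp⟩
  obtain ⟨k, rfl⟩ := Nat.exists_eq_add_of_le' hn
  rw [Nat.add_sub_cancel]
  have hexp : (k + 3 - 1) * (k + 3 - 2) / 2 = (k + 2).choose 2 := by
    rw [Nat.choose_two_right]; rfl
  rw [hexp]
  set G := E × (Fin k → Multiplicative (ZMod p)) with hG
  set F := FreeGroup G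
  set R := presentationKernel G with hR
  have hRn : R.Normal := MonoidHom.normal_ker _
  set N : Subgroup F := ⁅(⊤ : Subgroup F), R⁆ with hN
  set ε : F →* G := FreeGroup.lift (id : G → G) with hε
  have hεs : Function.Surjective ε := fun g => ⟨FreeGroup.of g, FreeGroup.lift_apply_of⟩
  have hNR : N ≤ R := Subgroup.commutator_le_right _ _
  have hNF : N ≤ commutator F := Subgroup.commutator_mono le_rfl le_top
  -- upper bound
  have hup : N.relIndex (commutator F) ∣ p ^ ((k + 2).choose 2) := by
    have h1 : N.relIndex (commutator F) = Nat.card (commutator (F ⧸ N)) := by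
      conv_lhs => rw [← QuotientGroup.ker_mk' N]
      rw [Subgroup.relIndex_ker, map_commutator_eq,
        MonoidHom.range_eq_top.2 (QuotientGroup.mk'_surjective N)]
      rfl
    rw [h1]
    refine SchurAux.upper hp hodd hE (QuotientGroup.lift N ε hNR) ?_ ?_
    · exact QuotientGroup.lift_surjective_of_surjective _ _ hεs _
    · intro a
      induction a using QuotientGroup.induction_on with
      | H r =>
        intro hr
        have hr' : r ∈ R := hr
        rw [Subgroup.mem_center_iff]
        intro b
        induction b using QuotientGroup.induction_on with
        | H f =>
          have : ⁅f, r⁆ ∈ N := Subgroup.commutator_mem_commutator (Subgroup.mem_top f) hr'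
          rw [← QuotientGroup.eq_one_iff] at this
          rw [← commutatorElement_eq_one_iff_mul_comm]
          exact this
  have hppos : p ^ ((k + 2).choose 2) ≠ 0 := pow_ne_zero _ hp.ne_zero
  have hne : N.relIndex (commutator F) ≠ 0 := ne_zero_of_dvd_ne_zero hppos hup
  -- the map onto an elementary abelian group
  obtain ⟨hfin, x, y, hxy, hpow, hzx, hzp, hcz⟩ := SchurAux.E_struct hp hE
  obtain ⟨⟨hZ, -, hcZ⟩, hcard, -⟩ := hE
  have hcomm : IsMulCommutative (E ⧸ Subgroup.center E) :=
    Subgroup.Normal.quotient_commutative_iff_commutator_le.2 hZ.ge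
  let _ : CommGroup (E ⧸ Subgroup.center E) :=
    { (inferInstance : Group (E ⧸ Subgroup.center E)) with mul_comm := hcomm.is_comm.comm }
  have hcQ : Nat.card (E ⧸ Subgroup.center E) = p ^ 2 := by
    have h := Subgroup.card_eq_card_quotient_mul_card_subgroup (Subgroup.center E)
    rw [hcard, hcZ, pow_succ p 2] at h
    exact (Nat.eq_of_mul_eq_mul_right hp.pos h).symm
  obtain ⟨π, hπ⟩ := SchurAux.elementary (m := k + 2) hp
    (B := (E ⧸ Subgroup.center E) × (Fin k → Multiplicative (ZMod p)))
    (by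
      rintro ⟨e, v⟩
      ext1
      · induction e using QuotientGroup.induction_on with
        | H e => exact (QuotientGroup.eq_one_iff _).2 (hpow e)
      · ext i
        simp only [Prod.pow_snd, Pi.pow_apply, Prod.snd_one, Pi.one_apply]
        rw [← ofAdd_toAdd (v i), ← ofAdd_nsmul]
        simp)
    (by
      rw [Nat.card_prod, hcQ, Nat.card_fun, Nat.card_congr Multiplicative.toAdd]
      simp [pow_add, mul_comm])
  have hlow := SchurAux.lower hp (G := G)
    (π.comp (MonoidHom.prodMap (QuotientGroup.mk' (Subgroup.center E)) (MonoidHom.id _)))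
    (hπ.comp (Function.Surjective.prodMap (QuotientGroup.mk'_surjective _) Function.surjective_id))
    hne
  have htot : N.relIndex (commutator F) = p ^ ((k + 2).choose 2) :=
    le_antisymm (Nat.le_of_dvd (Nat.pos_of_ne_zero hppos) hup) hlow
  have hmul := Subgroup.relIndex_mul_relIndex N (R ⊓ commutator F) (commutator F)
    (le_inf hNR hNF) inf_le_right
  have hGc : (R ⊓ commutator F).relIndex (commutator F) = p := by
    rw [Subgroup.inf_relIndex_right]
    change ε.ker.relIndex _ = p
    rw [Subgroup.relIndex_ker, map_commutator_eq, MonoidHom.range_eq_top.2 hεs,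
      ← Subgroup.top_prod_top, Subgroup.commutator_prod_prod]
    have hb : ⁅(⊤ : Subgroup (Fin k → Multiplicative (ZMod p))),
        (⊤ : Subgroup (Fin k → Multiplicative (ZMod p)))⁆ = ⊥ :=
      commutator_eq_bot (Fin k → Multiplicative (ZMod p))
    have hb' : ⁅(⊤ : Subgroup E), (⊤ : Subgroup E)⁆ = Subgroup.center E := hZ.symm
    rw [hb, hb', Nat.card_congr (Subgroup.prodEquiv _ _).toEquiv, Nat.card_prod, hcZ]
    simp
  rw [hGc, htot] at hmul
  have hM : Nat.card (SchurMultiplier G) = N.relIndex (R ⊓ commutator F) := rfl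
  rw [hM]
  have h1 : 1 ≤ (k + 2).choose 2 := Nat.choose_pos (by omega)
  apply Nat.eq_of_mul_eq_mul_right hp.pos
  rw [hmul, ← pow_succ, Nat.sub_add_cancel h1]
end

section
/- Let Q_8 be the quaternion group of order 8 and n ≥ 3. Then the Schur multiplier of G = Q_8 × (ℤ_2)^{n-3} has order 2^{(n-1)(n-2)/2 - 1}. -/
namespace SMQ

open scoped commutatorElement

abbrev GG (k : ℕ) := QuaternionGroup 2 × (Fin k → Multiplicative (ZMod 2))

def gi (k : ℕ) : GG k := (QuaternionGroup.a 1, 1)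
def gj (k : ℕ) : GG k := (QuaternionGroup.xa 0, 1)
def gv {k : ℕ} (b : Fin k) : GG k := (1, Pi.mulSingle b (Multiplicative.ofAdd 1))

abbrev PP (k : ℕ) := (b : Fin k) × (Fin 2 ⊕ Fin b.val)

def sel {k : ℕ} {X : Type*} (t u : X) (v : Fin k → X) (q : PP k) : X :=
  match q.2 with
  | Sum.inl i => if i = 0 then t else u
  | Sum.inr a => v (Fin.castLE q.1.isLt.le a)

lemma quat_gen (S : Subgroup (QuaternionGroup 2)) (h1 : QuaternionGroup.a 1 ∈ S)
    (h2 : QuaternionGroup.xa 0 ∈ S) : ∀ q, q ∈ S := by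
  have ha : ∀ i : ZMod 4, (QuaternionGroup.a i : QuaternionGroup 2) ∈ S := by
    intro i
    have : (QuaternionGroup.a i : QuaternionGroup 2) = (QuaternionGroup.a 1) ^ i.val := by
      revert i; decide
    rw [this]; exact S.pow_mem h1 _
  intro q
  rcases q with i | i
  · exact ha i
  · have := S.mul_mem h2 (ha i)
    rw [QuaternionGroup.xa_mul_a, zero_add] at this
    exact this

lemma G_gen {k : ℕ} (S : Subgroup (GG k)) (h1 : gi k ∈ S) (h2 : gj k ∈ S)
    (h3 : ∀ b, gv b ∈ S) : S = ⊤ := by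
  rw [eq_top_iff]
  rintro ⟨q, v⟩ -
  have hq : (q, 1) ∈ S := 
    quat_gen (S.comap (MonoidHom.inl (QuaternionGroup 2) (Fin k → Multiplicative (ZMod 2)))) h1 h2 q
  have hv : (1, v) ∈ S := by
    have hs : v ∈ S.comap (MonoidHom.inr (QuaternionGroup 2) _) := by
      rw [← Finset.univ_prod_mulSingle v]
      refine Subgroup.prod_mem _ fun b _ => ?_
      have hb : v b = 1 ∨ v b = Multiplicative.ofAdd 1 := by
        generalize v b = x
        revert x; decide
      rcases hb with hb | hb
      · rw [hb, Pi.mulSingle_one]; exact one_mem _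
      · rw [hb]; exact h3 b
    exact hs
  have := S.mul_mem hq hv
  simpa using this

lemma top_of {k : ℕ} {E : Type*} [Group E] (p : E →* GG k) (S : Subgroup E) (hk : p.ker ≤ S)
    {t u : E} {v : Fin k → E} (ht : p t = gi k) (hu : p u = gj k) (hv : ∀ b, p (v b) = gv b)
    (h1 : t ∈ S) (h2 : u ∈ S) (h3 : ∀ b, v b ∈ S) : S = ⊤ := by
  have hm : S.map p = ⊤ := G_gen _ ⟨t, h1, ht⟩ ⟨u, h2, hu⟩ fun b => ⟨v b, h3 b, hv b⟩
  rw [eq_top_iff]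
  intro x _
  have : p x ∈ S.map p := by rw [hm]; trivial
  obtain ⟨y, hy, hyx⟩ := this
  have : y⁻¹ * x ∈ S := hk (by rw [MonoidHom.mem_ker, map_mul, map_inv, hyx]; simp)
  simpa using S.mul_mem hy this

lemma central_of {k : ℕ} {E : Type*} [Group E] (p : E →* GG k) (hk : p.ker ≤ Subgroup.center E)
    {t u : E} {v : Fin k → E} (ht : p t = gi k) (hu : p u = gj k) (hv : ∀ b, p (v b) = gv b)
    (x : E) (h1 : t * x = x * t) (h2 : u * x = x * u) (h3 : ∀ b, v b * x = x * v b) :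
    x ∈ Subgroup.center E := by
  have := top_of p (Subgroup.centralizer {x}) ?_ ht hu hv ?_ ?_ ?_
  · rw [Subgroup.mem_center_iff]
    intro g
    have hg : g ∈ Subgroup.centralizer {x} := by rw [this]; trivial
    rw [Subgroup.mem_centralizer_singleton_iff] at hg
    exact hg
  · exact hk.trans (Subgroup.center_le_centralizer _)
  all_goals simpa only [Subgroup.mem_centralizer_singleton_iff]

lemma normal_central {E : Type*} [Group E] {N : Subgroup E} (h : N ≤ Subgroup.center E) :
    N.Normal := by
  refine ⟨fun x hx g => ?_⟩
  rw [Subgroup.mem_center_iff.1 (h hx) g]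
  simpa using hx

lemma keyD {k : ℕ} {E : Type*} [Group E] (p : E →* GG k) (hk : p.ker ≤ Subgroup.center E)
    {t u : E} {v : Fin k → E} (ht : p t = gi k) (hu : p u = gj k) (hv : ∀ b, p (v b) = gv b)
    (htv : ∀ b, t * v b = v b * t) (huv : ∀ b, u * v b = v b * u)
    (hvv : ∀ a b, v a * v b = v b * v a) : p.ker ⊓ commutator E = ⊥ := by
  have hvc : ∀ b, v b ∈ Subgroup.center E := fun b =>
    central_of p hk ht hu hv _ (htv b) (huv b) (fun a => hvv a b)
  have sameC : ∀ x y : E, p x = p y → y ∈ Subgroup.center E → x ∈ Subgroup.center E := by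
    intro x y hxy hy
    have : x * y⁻¹ ∈ Subgroup.center E := hk (by rw [MonoidHom.mem_ker, map_mul, map_inv, hxy]; simp)
    simpa using mul_mem this hy
  have hij : (gi k)^2 = (gj k)^2 := by
    refine Prod.ext ?_ ?_
    · show (QuaternionGroup.a 1 : QuaternionGroup 2)^2 = (QuaternionGroup.xa 0)^2
      decide
    · simp [gi, gj]
  have htu2 : p (t^2) = p (u^2) := by rw [map_pow, map_pow, ht, hu, hij]
  have ht2 : t^2 ∈ Subgroup.center E := by
    refine central_of p hk ht hu hv _ (by group) ?_ (fun b => ?_)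
    · have : t^2 * (u^2)⁻¹ ∈ Subgroup.center E :=
        hk (by rw [MonoidHom.mem_ker, map_mul, map_inv, htu2]; simp)
      have h := Subgroup.mem_center_iff.1 this u
      have e : t^2 = (t^2 * (u^2)⁻¹) * u^2 := by group
      rw [e, ← mul_assoc, h, mul_assoc, mul_assoc, mul_assoc, mul_assoc]
      congr 1
      group
    · exact (Subgroup.mem_center_iff.1 (hvc b) _).symm
  set z := ⁅t, u⁆ with hz
  have hpz : p z = (gi k)^2 := by
    rw [hz, map_commutatorElement, ht, hu]
    refine Prod.ext ?_ ?_
    · show ⁅(QuaternionGroup.a 1 : QuaternionGroup 2), (QuaternionGroup.xa 0 : QuaternionGroup 2)⁆ = (QuaternionGroup.a 1)^2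
      decide
    · simp [gi, gj, commutatorElement_def]
  have hzc : z ∈ Subgroup.center E := sameC z (t^2) (by rw [hpz, map_pow, ht]) ht2
  have hzc' := Subgroup.mem_center_iff.1 hzc
  have htu : t * u = z * (u * t) := by rw [hz, commutatorElement_def]; group
  have hz2 : z ^ 2 = 1 := by
    have h1 : t^2 * u = z^2 * (u * t^2) := by
      calc t^2 * u = t * (t * u) := by rw [pow_two, mul_assoc]
        _ = (t * z) * (u * t) := by rw [htu]; simp only [mul_assoc]
        _ = z * (t * u) * t := by rw [hzc']; simp only [mul_assoc]
        _ = z^2 * (u * t^2) := by rw [htu]; simp only [mul_assoc, pow_two]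
    rw [Subgroup.mem_center_iff.1 ht2 u] at h1
    exact (mul_eq_right.1 h1.symm)
  have hN : (Subgroup.zpowers z).Normal := normal_central (by
    rw [Subgroup.zpowers_le]; exact hzc)
  have hcomm : commutator E ≤ Subgroup.zpowers z := by
    let q := QuotientGroup.mk' (Subgroup.zpowers z)
    have hqtu : q t * q u = q u * q t := by
      rw [← map_mul, htu, map_mul, map_mul]
      have : q z = 1 := (QuotientGroup.eq_one_iff z).2 (Subgroup.mem_zpowers z)
      rw [this, one_mul]
    have hqc : ∀ x, x ∈ Subgroup.center E → ∀ y, q x * q y = q y * q x := by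
      intro x hx y
      rw [← map_mul, ← map_mul, Subgroup.mem_center_iff.1 hx]
    have key : ∀ x : E, q t * q x = q x * q t → q u * q x = q x * q u →
        ∀ y, q y * q x = q x * q y := by
      intro x h1 h2 y
      have := top_of p ((Subgroup.centralizer {q x}).comap q) ?_ ht hu hv ?_ ?_ ?_
      · have hy : y ∈ ((Subgroup.centralizer {q x}).comap q) := by rw [this]; trivial
        rw [Subgroup.mem_comap, Subgroup.mem_centralizer_singleton_iff] at hy
        exact hy
      · intro y hy
        rw [Subgroup.mem_comap, Subgroup.mem_centralizer_singleton_iff]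
        exact hqc y (hk hy) x
      · rw [Subgroup.mem_comap, Subgroup.mem_centralizer_singleton_iff]; exact h1
      · rw [Subgroup.mem_comap, Subgroup.mem_centralizer_singleton_iff]; exact h2
      · intro b
        rw [Subgroup.mem_comap, Subgroup.mem_centralizer_singleton_iff]
        exact hqc _ (hvc b) x
    have kt := key t rfl hqtu.symm
    have ku := key u hqtu rfl
    rw [commutator_def, Subgroup.commutator_le]
    intro x _ y _
    rw [← QuotientGroup.eq_one_iff]
    change q ⁅x, y⁆ = 1
    rw [map_commutatorElement, commutatorElement_eq_one_iff_mul_comm]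
    exact key y (kt y).symm (ku y).symm x
  rw [eq_bot_iff]
  rintro w ⟨hw1, hw2⟩
  obtain ⟨m, rfl⟩ := hcomm hw2
  rcases Int.even_or_odd' m with ⟨l, rfl | rfl⟩
  · show z ^ (2 * l) ∈ _
    rw [zpow_mul, show z ^ (2:ℤ) = 1 by exact_mod_cast hz2]; simp
  · exfalso
    have : p z = 1 := by
      have h : p (z ^ (2 * l + 1)) = 1 := hw1
      rw [zpow_add, zpow_mul, show z ^ (2:ℤ) = 1 by exact_mod_cast hz2] at h
      simpa using h
    rw [hpz] at this
    have h := congrArg Prod.fst this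
    change (QuaternionGroup.a 1 : QuaternionGroup 2)^2 = 1 at h
    revert h; decide


lemma card_central {E : Type*} [Group E] {P : Type*} [Fintype P] (x : P → E)
    (hx : ∀ q, x q ∈ Subgroup.center E) (hx2 : ∀ q, x q ^ 2 = 1) :
    Nat.card (Subgroup.closure (Set.range x)) ∣ 2 ^ Fintype.card P := by
  classical
  set N := Subgroup.closure (Set.range x) with hN
  have hNc : N ≤ Subgroup.center E := by
    rw [hN, Subgroup.closure_le]
    rintro _ ⟨q, rfl⟩
    exact hx q
  let _ : CommGroup N :=
    { (inferInstance : Group N) with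
      mul_comm := fun a b => Subtype.ext (Subgroup.mem_center_iff.1 (hNc b.2) a.1) }
  have hset : Set.range x = ((Finset.univ.image x : Finset E) : Set E) := by simp
  have hfg : Group.FG N := by
    rw [hN, hset]
    infer_instance
  have hr : Group.rank N ≤ Fintype.card P := by
    have h := Subgroup.rank_closure_finset_le_card (Finset.univ.image x)
    refine le_trans (le_of_eq ?_) (h.trans Finset.card_image_le)
    congr!
  refine (card_dvd_exponent_pow_rank' (n := 2) N ?_).trans (pow_dvd_pow 2 hr)
  rintro ⟨g, hg⟩
  refine Subtype.ext ?_
  show g ^ 2 = 1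
  refine Subgroup.closure_induction (p := fun g _ => g ^ 2 = 1) ?_ (one_pow 2) ?_ ?_ hg
  · rintro _ ⟨q, rfl⟩
    exact hx2 q
  · intro a b ha hb h1 h2
    have : Commute a b := Subgroup.mem_center_iff.1 (hNc hb) a
    rw [this.mul_pow, h1, h2, one_mul]
  · intro a _ h1
    rw [inv_pow, h1, inv_one]

lemma gv_sq {k : ℕ} (b : Fin k) : (gv b) ^ 2 = 1 := by
  refine Prod.ext (by simp [gv]) ?_
  show (Pi.mulSingle b (Multiplicative.ofAdd 1) : Fin k → Multiplicative (ZMod 2)) ^ 2 = 1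
  rw [← Pi.mulSingle_pow]
  rw [show (Multiplicative.ofAdd (1 : ZMod 2)) ^ 2 = 1 by decide, Pi.mulSingle_one]

lemma gv_comm {k : ℕ} (b : Fin k) (g : GG k) : g * gv b = gv b * g := by
  refine Prod.ext (by simp [gv]) ?_
  exact mul_comm _ _

lemma upper {k : ℕ} {E : Type*} [Group E] (p : E →* GG k) (hp : Function.Surjective p)
    (hk : p.ker ≤ Subgroup.center E) :
    ∃ N : Subgroup E, p.ker ⊓ commutator E ≤ N ∧ Nat.card N ∣ 2 ^ Fintype.card (PP k) := by
  obtain ⟨t, ht⟩ := hp (gi k)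
  obtain ⟨u, hu⟩ := hp (gj k)
  choose v hv using fun b : Fin k => hp (gv b)
  let x : PP k → E := fun q => ⁅sel t u v q, v q.1⁆
  have hxk : ∀ q, x q ∈ p.ker := by
    intro q
    rw [MonoidHom.mem_ker, map_commutatorElement, commutatorElement_eq_one_iff_mul_comm, hv]
    exact gv_comm _ _
  have hx2 : ∀ q, x q ^ 2 = 1 := by
    intro q
    have hz := Subgroup.mem_center_iff.1 (hk (hxk q))
    have hv2 : (v q.1) ^ 2 ∈ Subgroup.center E := hk (by rw [MonoidHom.mem_ker, map_pow, hv, gv_sq])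
    generalize hs : sel t u v q = s at *
    have hxx : x q = ⁅s, v q.1⁆ := by rw [← hs]
    generalize v q.1 = w at *
    generalize x q = z at *
    have h : s * w = z * (w * s) := by rw [hxx, commutatorElement_def]; group
    have h1 : s * w ^ 2 = z ^ 2 * (w ^ 2 * s) := by
      calc s * w ^ 2 = (s * w) * w := by rw [pow_two, mul_assoc]
        _ = z * w * (s * w) := by conv_lhs => rw [h]
                                  simp only [mul_assoc]
        _ = z * (w * z) * (w * s) := by rw [h]; simp only [mul_assoc]
        _ = z ^ 2 * (w ^ 2 * s) := by rw [hz w]; simp only [mul_assoc, pow_two]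
    rw [Subgroup.mem_center_iff.1 hv2 s] at h1
    exact mul_eq_right.1 h1.symm
  set N := Subgroup.closure (Set.range x) with hN
  refine ⟨N, ?_, card_central x (fun q => hk (hxk q)) hx2⟩
  have hNk : N ≤ p.ker := by
    rw [hN, Subgroup.closure_le]
    rintro _ ⟨q, rfl⟩
    exact hxk q
  have : N.Normal := normal_central (hNk.trans hk)
  let m := QuotientGroup.mk' N
  let p' : E ⧸ N →* GG k := QuotientGroup.lift N p hNk
  have hp' : ∀ e, p' (m e) = p e := fun e => rfl
  have hmx : ∀ q, m (sel t u v q) * m (v q.1) = m (v q.1) * m (sel t u v q) := by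
    intro q
    rw [← commutatorElement_eq_one_iff_mul_comm, ← map_commutatorElement]
    exact (QuotientGroup.eq_one_iff (x q)).2 (Subgroup.subset_closure ⟨q, rfl⟩)
  have hlt : ∀ a b : Fin k, a < b → m (v a) * m (v b) = m (v b) * m (v a) := by
    intro a b hab
    exact hmx ⟨b, Sum.inr ⟨a.1, hab⟩⟩
  have hD := keyD p' ?_ (t := m t) (u := m u) (v := fun b => m (v b)) ht hu hv ?_ ?_ ?_
  · rintro w ⟨hw1, hw2⟩
    have hmw : m w ∈ p'.ker ⊓ commutator (E ⧸ N) := by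
      refine ⟨hw1, ?_⟩
      have : m w ∈ (commutator E).map m := ⟨w, hw2, rfl⟩
      rw [commutator_def, Subgroup.map_commutator] at this
      exact Subgroup.commutator_mono le_top le_top this
    rw [hD, Subgroup.mem_bot] at hmw
    exact (QuotientGroup.eq_one_iff w).1 hmw
  · intro w hw
    obtain ⟨e, rfl⟩ := QuotientGroup.mk'_surjective N w
    have he : e ∈ Subgroup.center E := hk hw
    rw [Subgroup.mem_center_iff]
    intro g
    obtain ⟨f, rfl⟩ := QuotientGroup.mk'_surjective N g
    rw [← map_mul, ← map_mul, Subgroup.mem_center_iff.1 he]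
  · intro b
    exact hmx ⟨b, Sum.inl 0⟩
  · intro b
    exact hmx ⟨b, Sum.inl 1⟩
  · intro a b
    rcases lt_trichotomy a b with h | h | h
    · exact hlt a b h
    · rw [h]
    · exact (hlt b a h).symm

def chiI : QuaternionGroup 2 → ZMod 2
  | QuaternionGroup.a i => (i.val : ZMod 2)
  | QuaternionGroup.xa i => (i.val : ZMod 2)

def chiJ : QuaternionGroup 2 → ZMod 2
  | QuaternionGroup.a _ => 0
  | QuaternionGroup.xa _ => 1

lemma chiI_mul : ∀ g h, chiI (g * h) = chiI g + chiI h := by decide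
lemma chiJ_mul : ∀ g h, chiJ (g * h) = chiJ g + chiJ h := by decide

def X1 {k : ℕ} (q : PP k) : GG k → ZMod 2 :=
  sel (fun g => chiI g.1) (fun g => chiJ g.1) (fun b g => Multiplicative.toAdd (g.2 b)) q

def X2 {k : ℕ} (q : PP k) : GG k → ZMod 2 := fun g => Multiplicative.toAdd (g.2 q.1)

lemma X1_mul {k : ℕ} (q : PP k) (g h : GG k) : X1 q (g * h) = X1 q g + X1 q h := by
  obtain ⟨b, i | a⟩ := q
  · by_cases hi : i = 0
    · simp only [X1, sel, hi, if_true]; exact chiI_mul _ _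
    · simp only [X1, sel, hi, if_false]; exact chiJ_mul _ _
  · rfl

lemma X2_mul {k : ℕ} (q : PP k) (g h : GG k) : X2 q (g * h) = X2 q g + X2 q h := rfl

lemma X1_one {k : ℕ} (q : PP k) : X1 q 1 = 0 := by
  have := X1_mul q 1 1
  rw [one_mul] at this
  simpa using this

lemma X2_one {k : ℕ} (q : PP k) : X2 q 1 = 0 := rfl

@[ext] structure Tw (k : ℕ) where
  g : GG k
  w : PP k → ZMod 2

instance (k : ℕ) : Mul (Tw k) := ⟨fun x y => ⟨x.g * y.g, fun q => x.w q + y.w q + X1 q x.g * X2 q y.g⟩⟩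
instance (k : ℕ) : One (Tw k) := ⟨⟨1, 0⟩⟩
instance (k : ℕ) : Inv (Tw k) := ⟨fun x => ⟨x.g⁻¹, fun q => - x.w q - X1 q x.g⁻¹ * X2 q x.g⟩⟩

lemma Tw_mul_g {k : ℕ} (x y : Tw k) : (x * y).g = x.g * y.g := rfl
lemma Tw_mul_w {k : ℕ} (x y : Tw k) (q) : (x * y).w q = x.w q + y.w q + X1 q x.g * X2 q y.g := rfl
lemma Tw_one_g {k : ℕ} : (1 : Tw k).g = 1 := rfl
lemma Tw_one_w {k : ℕ} (q) : (1 : Tw k).w q = 0 := rfl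
lemma Tw_inv_g {k : ℕ} (x : Tw k) : (x⁻¹).g = x.g⁻¹ := rfl
lemma Tw_inv_w {k : ℕ} (x : Tw k) (q) : (x⁻¹).w q = - x.w q - X1 q x.g⁻¹ * X2 q x.g := rfl

instance (k : ℕ) : Group (Tw k) := Group.ofLeftAxioms
  (fun x y z => by
    refine Tw.ext (mul_assoc _ _ _) (funext fun q => ?_)
    simp only [Tw_mul_g, Tw_mul_w, X1_mul, X2_mul]; ring)
  (fun x => by
    refine Tw.ext (one_mul _) (funext fun q => ?_)
    simp only [Tw_mul_w, Tw_one_g, Tw_one_w, X1_one]; ring)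
  (fun x => by
    refine Tw.ext (inv_mul_cancel _) (funext fun q => ?_)
    simp only [Tw_mul_w, Tw_inv_g, Tw_inv_w, Tw_one_w]; ring)

def twProj (k : ℕ) : Tw k →* GG k where
  toFun := Tw.g
  map_one' := rfl
  map_mul' _ _ := rfl

def phi (k : ℕ) : FreeGroup (GG k) →* Tw k := FreeGroup.lift fun g => ⟨g, 0⟩

lemma proj_phi (k : ℕ) (x : FreeGroup (GG k)) : (phi k x).g = FreeGroup.lift (id : GG k → GG k) x := by
  have : (twProj k).comp (phi k) = FreeGroup.lift (id : GG k → GG k) := by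
    ext g : 1
    simp [phi, twProj]
  exact DFunLike.congr_fun this x

lemma tw_central {k : ℕ} (x : Tw k) (hx : x.g = 1) (y : Tw k) : x * y = y * x := by
  refine Tw.ext (by simp [Tw_mul_g, hx]) (funext fun q => ?_)
  simp only [Tw_mul_w, hx, X1_one, X2_one]; ring

lemma comm_le_ker (k : ℕ) :
    ⁅(⊤ : Subgroup (FreeGroup (GG k))), presentationKernel (GG k)⁆ ≤ (phi k).ker := by
  rw [Subgroup.commutator_le]
  intro x _ y hy
  rw [MonoidHom.mem_ker, map_commutatorElement, commutatorElement_eq_one_iff_mul_comm]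
  exact (tw_central _ ((proj_phi k y).trans hy) _).symm

def g1 {k : ℕ} (q : PP k) : GG k := sel (gi k) (gj k) gv q

lemma X2_gv {k : ℕ} (r : PP k) (b : Fin k) : X2 r (gv b) = if r.1 = b then 1 else 0 := by
  simp only [X2, gv, Pi.mulSingle_apply]
  split <;> rfl

lemma X2_g1 {k : ℕ} (r : PP k) (b : Fin k) (s) (h : X2 r (g1 ⟨b, s⟩) ≠ 0) : r.1 < b := by
  rcases s with i | a
  · exfalso; apply h
    simp only [g1, sel]
    split <;> rfl
  · simp only [g1, sel, X2_gv] at h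
    have : r.1 = Fin.castLE b.isLt.le a := by
      by_contra hh; exact h (if_neg hh)
    rw [this]
    exact a.2

lemma X1_gv {k : ℕ} (b c : Fin k) (s) (h : X1 ⟨c, s⟩ (gv b) ≠ 0) : b < c := by
  rcases s with i | a
  · exfalso; apply h
    simp only [X1, sel]
    split <;> rfl
  · simp only [X1, sel, gv, Pi.mulSingle_apply] at h
    have : Fin.castLE c.isLt.le a = b := by
      by_contra hh; rw [if_neg hh] at h; exact h rfl
    rw [← this]
    exact a.2

lemma X1_g1 {k : ℕ} (b : Fin k) (s r : Fin 2 ⊕ Fin b.val) :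
    X1 ⟨b, r⟩ (g1 ⟨b, s⟩) = if r = s then 1 else 0 := by
  rcases s with i | a <;> rcases r with j | c
  · fin_cases i <;> fin_cases j <;> simp [X1, g1, sel, gi, gj] <;> decide
  · simp [X1, g1, sel]
    split <;> rfl
  · simp [X1, g1, sel]
    split <;> rfl
  · simp [X1, g1, sel, gv, Pi.mulSingle_apply, Fin.ext_iff]
    split <;> rfl

lemma beta_delta {k : ℕ} (q r : PP k) :
    X1 r (g1 q) * X2 r (gv q.1) = Pi.single (M := fun _ => ZMod 2) q 1 r + X1 r (gv q.1) * X2 r (g1 q) := by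
  obtain ⟨b, s⟩ := q
  obtain ⟨c, r⟩ := r
  have h0 : X1 ⟨c, r⟩ (gv b) * X2 ⟨c, r⟩ (g1 ⟨b, s⟩) = 0 := by
    by_contra h
    exact lt_asymm (X1_gv _ _ _ (left_ne_zero_of_mul h)) (X2_g1 _ _ _ (right_ne_zero_of_mul h))
  rw [h0, add_zero, X2_gv, Pi.single_apply]
  by_cases hcb : c = b
  · subst hcb
    rw [X1_g1]
    simp
  · rw [if_neg hcb, mul_zero, if_neg]
    intro h
    exact hcb (congrArg Sigma.fst h)

lemma tw_comm {k : ℕ} (q : PP k) :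
    ⁅(⟨g1 q, 0⟩ : Tw k), (⟨gv q.1, 0⟩ : Tw k)⁆ = ⟨1, Pi.single q 1⟩ := by
  have : (⟨g1 q, 0⟩ : Tw k) * ⟨gv q.1, 0⟩ =
      (⟨1, Pi.single q 1⟩ : Tw k) * ((⟨gv q.1, 0⟩ : Tw k) * (⟨g1 q, 0⟩ : Tw k)) := by
    refine Tw.ext ?_ (funext fun r => ?_)
    · simp only [Tw_mul_g, one_mul]; exact gv_comm _ _
    · simp only [Tw_mul_w, X1_one, Pi.zero_apply, zero_add, zero_mul, add_zero]
      exact beta_delta q r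
  rw [commutatorElement_def, this]; group

lemma lower (k : ℕ) (w : PP k → ZMod 2) : (⟨1, w⟩ : Tw k) ∈
    (presentationKernel (GG k) ⊓ commutator (FreeGroup (GG k))).map (phi k) := by
  set S := (presentationKernel (GG k) ⊓ commutator (FreeGroup (GG k))).map (phi k)
  have hadd : ∀ a b : PP k → ZMod 2, (⟨1, a + b⟩ : Tw k) = ⟨1, a⟩ * ⟨1, b⟩ := by
    intro a b
    refine Tw.ext (by simp [Tw_mul_g]) (funext fun r => ?_)
    simp [Tw_mul_w, X1_one]
  let A : AddSubmonoid (PP k → ZMod 2) :=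
    { carrier := {w | (⟨1, w⟩ : Tw k) ∈ S}
      zero_mem' := S.one_mem
      add_mem' := fun {a b} ha hb => by
        show _ ∈ S
        rw [hadd]; exact S.mul_mem ha hb }
  show w ∈ A
  rw [← Finset.univ_sum_single w]
  refine AddSubmonoid.sum_mem _ fun q _ => ?_
  have hb : w q = 0 ∨ w q = 1 := by
    generalize w q = x
    revert x; decide
  rcases hb with hb | hb
  · rw [hb, Pi.single_zero]; exact A.zero_mem
  · rw [hb]
    refine ⟨⁅FreeGroup.of (g1 q), FreeGroup.of (gv q.1)⁆, ⟨?_, ?_⟩, ?_⟩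
    · show FreeGroup.lift _ _ = 1
      rw [map_commutatorElement, commutatorElement_eq_one_iff_mul_comm]
      simpa using gv_comm _ _
    · exact Subgroup.commutator_mem_commutator trivial trivial
    · rw [map_commutatorElement, ← tw_comm]
      simp [phi]

lemma card_PP (k : ℕ) : Fintype.card (PP k) = 2 * k + k * (k - 1) / 2 := by
  rw [Fintype.card_sigma]
  simp only [Fintype.card_sum, Fintype.card_fin, Finset.sum_add_distrib]
  rw [Fin.sum_univ_eq_sum_range (fun i => i), Finset.sum_range_id]
  simp [mul_comm]

lemma main (k : ℕ) : Nat.card (SchurMultiplier (GG k)) = 2 ^ Fintype.card (PP k) := by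
  set R := presentationKernel (GG k) with hR
  set F := FreeGroup (GG k)
  set C := ⁅(⊤ : Subgroup F), R⁆ with hC
  have hRn : R.Normal := MonoidHom.normal_ker _
  have hcard : Nat.card (SchurMultiplier (GG k)) = C.relIndex (R ⊓ commutator F) := rfl
  have hCR : C ≤ R := Subgroup.commutator_le_right _ _
  have hup : C.relIndex (R ⊓ commutator F) ∣ 2 ^ Fintype.card (PP k) := by
    let m := QuotientGroup.mk' C
    let p : F ⧸ C →* GG k := QuotientGroup.lift C (FreeGroup.lift (id : GG k → GG k)) hCR
    have hs : Function.Surjective p := by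
      intro g
      exact ⟨m (FreeGroup.of g), by
        show FreeGroup.lift (id : GG k → GG k) (FreeGroup.of g) = g
        simp⟩
    have hc : p.ker ≤ Subgroup.center (F ⧸ C) := by
      intro w hw
      obtain ⟨e, rfl⟩ := QuotientGroup.mk'_surjective C w
      have he : e ∈ R := hw
      rw [Subgroup.mem_center_iff]
      intro g
      obtain ⟨f, rfl⟩ := QuotientGroup.mk'_surjective C g
      rw [← commutatorElement_eq_one_iff_mul_comm, ← map_commutatorElement]
      exact (QuotientGroup.eq_one_iff _).2 (Subgroup.commutator_mem_commutator trivial he)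
    obtain ⟨N, hN, hNc⟩ := upper p hs hc
    rw [← QuotientGroup.ker_mk' C, Subgroup.relIndex_ker]
    refine (Subgroup.card_dvd_of_le ?_).trans hNc
    refine le_trans ?_ hN
    rintro _ ⟨x, ⟨hx1, hx2⟩, rfl⟩
    refine ⟨hx1, ?_⟩
    have : m x ∈ (commutator F).map m := ⟨x, hx2, rfl⟩
    rw [commutator_def, Subgroup.map_commutator] at this
    exact Subgroup.commutator_mono le_top le_top this
  have hpos : C.relIndex (R ⊓ commutator F) ≠ 0 := fun h => by
    rw [h, zero_dvd_iff] at hup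
    exact pow_ne_zero _ two_ne_zero hup
  have hd : (phi k).ker.relIndex (R ⊓ commutator F) ∣ C.relIndex (R ⊓ commutator F) :=
    Subgroup.relIndex_dvd_of_le_left _ (comm_le_ker k)
  have hne : (phi k).ker.relIndex (R ⊓ commutator F) ≠ 0 := fun h => by
    rw [h, zero_dvd_iff] at hd; exact hpos hd
  have hlow : 2 ^ Fintype.card (PP k) ≤ (phi k).ker.relIndex (R ⊓ commutator F) := by
    rw [Subgroup.relIndex_ker] at hne ⊢
    have := Nat.finite_of_card_ne_zero hne
    have h := Nat.card_le_card_of_injective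
      (fun w : PP k → ZMod 2 => (⟨⟨1, w⟩, lower k w⟩ :
        (presentationKernel (GG k) ⊓ commutator (FreeGroup (GG k))).map (phi k)))
      (fun a b hab => congrArg (fun x => x.1.w) hab)
    simpa using h
  rw [hcard]
  exact le_antisymm (Nat.le_of_dvd (by positivity) hup)
    (hlow.trans (Nat.le_of_dvd (Nat.pos_of_ne_zero hpos) hd))

end SMQ

/-- The Schur multiplier of `Q₈ × ℤ₂^(n-3)` (`n ≥ 3`) has order
`2^((n-1)(n-2)/2 - 1)`. -/
theorem schurMultiplier_quaternion_times_elementary {n : ℕ} (hn : 3 ≤ n) :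
    Nat.card (SchurMultiplier
        (QuaternionGroup 2 × (Fin (n - 3) → Multiplicative (ZMod 2)))) =
      2 ^ ((n - 1) * (n - 2) / 2 - 1) := by
  obtain ⟨k, rfl⟩ := Nat.exists_eq_add_of_le' hn
  have h := SMQ.main k
  rw [SMQ.card_PP] at h
  have e : (k + 3 - 1) * (k + 3 - 2) / 2 - 1 = 2 * k + k * (k - 1) / 2 := by
    rcases k with _ | k
    · rfl
    · have : (k + 1 + 3 - 1) * (k + 1 + 3 - 2) = (k + 1) * (k + 1 - 1) + 2 * (2 * (k + 1) + 1) := by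
        simp only [Nat.add_sub_cancel, show k + 1 + 3 - 1 = k + 3 by omega,
          show k + 1 + 3 - 2 = k + 2 by omega]
        ring
      rw [this, Nat.add_mul_div_left _ _ two_pos]
      omega
  rw [e]
  exact h
end

section
/- Let p be a prime and E a group of type E(2) of order p^{2m+2}, i.e. E has subgroups H and K with H extraspecial of order p^{2m+1}, K cyclic of order p^2, every element of H commuting with every element of K, E = HK, and H ∩ K = Z(H). Then the Schur multiplier of E has order p^{2m^2 + m - 1}. -/
/-- `E` is a group of type `E(2)` (with parameter `m`): a central product of an
extraspecial `p`-group `H` of order `p^(2m+1)` with a cyclic group `K` of order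
`p^2`, amalgamated over the center of `H`: `H` and `K` commute elementwise,
`E = HK` and `H ⊓ K = Z(H)`. -/
def IsTypeE2 (p m : ℕ) (E : Type*) [Group E] : Prop :=
  ∃ H K : Subgroup E,
    IsExtraspecial p H ∧ Nat.card H = p ^ (2 * m + 1) ∧
    IsCyclic K ∧ Nat.card K = p ^ 2 ∧
    (∀ h ∈ H, ∀ k ∈ K, h * k = k * h) ∧
    H ⊔ K = ⊤ ∧ (H ⊓ K).subgroupOf H = Subgroup.center H

section Aux
open scoped commutatorElement


abbrev Pr (n : ℕ) : Type := {q : Fin n × Fin n // q.1 < q.2}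

theorem card_Pr (n : ℕ) : Fintype.card (Pr n) = n.choose 2 := by
  have : Fintype.card (Pr n) = ∑ i : Fin n, ∑ j : Fin n, if i < j then 1 else 0 := by
    rw [← Fintype.sum_prod_type' (f := fun i j : Fin n => if i < j then 1 else 0)]
    rw [← Finset.card_filter]
    exact Fintype.card_subtype _
  rw [this, Finset.sum_comm, Nat.choose_two_right, ← Finset.sum_range_id, Finset.sum_range]
  refine Finset.sum_congr rfl fun i _ => ?_
  rw [← Finset.card_filter]
  have : (Finset.univ.filter fun j => j < i) = Finset.Iio i := by ext; simp
  rw [this, Fin.card_Iio]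

@[ext] structure Heis (p n : ℕ) where
  a : Pr n → ZMod p
  x : Fin n → ZMod p

namespace Heis
variable {p n : ℕ}
instance : Mul (Heis p n) := ⟨fun g h => ⟨fun q => g.a q + h.a q + g.x q.1.1 * h.x q.1.2, g.x + h.x⟩⟩
instance : One (Heis p n) := ⟨⟨0, 0⟩⟩
instance : Inv (Heis p n) := ⟨fun g => ⟨fun q => - g.a q + g.x q.1.1 * g.x q.1.2, - g.x⟩⟩
theorem mul_a (g h : Heis p n) (q) : (g * h).a q = g.a q + h.a q + g.x q.1.1 * h.x q.1.2 := rfl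
theorem mul_x (g h : Heis p n) : (g * h).x = g.x + h.x := rfl
theorem one_a : (1 : Heis p n).a = 0 := rfl
theorem one_x : (1 : Heis p n).x = 0 := rfl
theorem inv_a (g : Heis p n) (q) : (g⁻¹).a q = - g.a q + g.x q.1.1 * g.x q.1.2 := rfl
theorem inv_x (g : Heis p n) : (g⁻¹).x = - g.x := rfl
instance : Group (Heis p n) := Group.ofLeftAxioms
  (by intro a b c
      ext q
      · simp only [mul_a, mul_x, Pi.add_apply]; ring
      · simp only [mul_x, Pi.add_apply]; ring)
  (by intro a
      ext q
      · simp [mul_a, one_a, one_x]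
      · simp [mul_x, one_x])
  (by intro a
      ext q
      · simp [mul_a, one_a, inv_a, inv_x]
      · simp [mul_x, inv_x, one_x])

def xHom : Heis p n →* Multiplicative (Fin n → ZMod p) where
  toFun g := Multiplicative.ofAdd g.x
  map_one' := rfl
  map_mul' _ _ := rfl

def ι : Multiplicative (Pr n → ZMod p) →* Heis p n where
  toFun a := ⟨a.toAdd, 0⟩
  map_one' := rfl
  map_mul' a b := by
    ext q
    · simp [mul_a]
    · simp [mul_x]

theorem comm_eq (g h : Heis p n) :
    ⁅g, h⁆ = ι (Multiplicative.ofAdd fun q => g.x q.1.1 * h.x q.1.2 - h.x q.1.1 * g.x q.1.2) := by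
  rw [commutatorElement_def, mul_inv_eq_iff_eq_mul, mul_inv_eq_iff_eq_mul]
  ext q
  · simp only [mul_a, mul_x, ι, Pi.add_apply]; simp; ring
  · simp only [mul_x, ι, Pi.add_apply]; simp; ring
end Heis

theorem decomp {p : ℕ} [Fact p.Prime] {κ : Type*} [Fintype κ] [DecidableEq κ]
    (a : Multiplicative (κ → ZMod p)) :
    a = ∏ q, (Multiplicative.ofAdd (Pi.single q 1 : κ → ZMod p)) ^ (a.toAdd q).val := by
  apply Multiplicative.toAdd.injective
  rw [toAdd_prod]
  ext r
  rw [Finset.sum_apply, Finset.sum_eq_single r]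
  · rw [toAdd_pow, Pi.smul_apply, toAdd_ofAdd, Pi.single_eq_same, nsmul_eq_mul, mul_one,
      ZMod.natCast_zmod_val]
  · intro b _ hb
    rw [toAdd_pow, Pi.smul_apply, toAdd_ofAdd, Pi.single_eq_of_ne hb.symm, smul_zero]
  · simp

theorem lower {p n : ℕ} [Fact p.Prime] {X : Type*}
    (φ : FreeGroup X →* Multiplicative (Fin n → ZMod p)) (hφ : Function.Surjective φ) :
    p ^ n.choose 2 ∣ (⁅(⊤ : Subgroup (FreeGroup X)), φ.ker⁆).relIndex (commutator (FreeGroup X)) := by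
  let Ψ : FreeGroup X →* Heis p n :=
    FreeGroup.lift fun e => ⟨0, (φ (FreeGroup.of e)).toAdd⟩
  have hx : ∀ f, (Ψ f).x = (φ f).toAdd := by
    have : Heis.xHom.comp Ψ = φ := by
      ext e
      simp [Ψ, Heis.xHom]
    intro f
    rw [← this]; rfl
  have h1 : ⁅(⊤ : Subgroup (FreeGroup X)), φ.ker⁆ ≤ Ψ.ker := by
    rw [Subgroup.commutator_le]
    intro f _ s hs
    rw [MonoidHom.mem_ker, map_commutatorElement, Heis.comm_eq, hx s, MonoidHom.mem_ker.1 hs]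
    simp only [toAdd_one, Pi.zero_apply, mul_zero, zero_mul, sub_zero]
    exact map_one _
  refine dvd_trans ?_ (Subgroup.relIndex_dvd_of_le_left _ h1)
  rw [Subgroup.relIndex_ker]
  have h2 : (Heis.ι (p := p) (n := n)).range ≤ (commutator (FreeGroup X)).map Ψ := by
    rintro _ ⟨a, rfl⟩
    have ha : a = ∏ q, (Multiplicative.ofAdd (Pi.single q 1 : Pr n → ZMod p)) ^ (a.toAdd q).val := decomp a
    rw [ha, ← Subgroup.mem_comap]
    refine Subgroup.prod_mem _ fun q _ => ?_
    refine Subgroup.pow_mem _ ?_ _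
    rw [Subgroup.mem_comap]
    obtain ⟨f, hf⟩ := hφ (Multiplicative.ofAdd (Pi.single q.1.1 1))
    obtain ⟨g, hg⟩ := hφ (Multiplicative.ofAdd (Pi.single q.1.2 1))
    refine ⟨⁅f, g⁆, Subgroup.commutator_mem_commutator (Subgroup.mem_top _) (Subgroup.mem_top _), ?_⟩
    rw [map_commutatorElement, Heis.comm_eq, hx, hx, hf, hg]
    congr 2
    ext r
    obtain ⟨⟨i, j⟩, hij⟩ := q
    obtain ⟨⟨k, l⟩, hkl⟩ := r
    have hz : (Pi.single i 1 : Fin n → ZMod p) l * (Pi.single j 1 : Fin n → ZMod p) k = 0 := by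
      rcases eq_or_ne l i with rfl | h1
      · rw [Pi.single_eq_of_ne (i := j) (lt_trans hkl hij).ne, mul_zero]
      · rw [Pi.single_eq_of_ne h1, zero_mul]
    have hz' : (Pi.single j 1 : Fin n → ZMod p) k * (Pi.single i 1 : Fin n → ZMod p) l = 0 := by
      rw [mul_comm, hz]
    simp only [toAdd_ofAdd]
    rw [hz', sub_zero]
    by_cases h : k = i ∧ l = j
    · obtain ⟨rfl, rfl⟩ := h
      simp
    · have hne : (⟨(k, l), hkl⟩ : Pr n) ≠ ⟨(i, j), hij⟩ := by
        intro e
        have := congrArg Subtype.val e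
        exact h (Prod.mk.inj this)
      rw [Pi.single_eq_of_ne hne]
      by_cases h1 : k = i
      · rw [Pi.single_eq_of_ne (i' := l) (fun h2 => h ⟨h1, h2⟩), mul_zero]
      · rw [Pi.single_eq_of_ne h1, zero_mul]
  have h3 := Subgroup.card_dvd_of_le h2
  refine dvd_trans (dvd_of_eq ?_) h3
  have hinj : Function.Injective (Heis.ι (p := p) (n := n)) := by
    intro a b hab
    exact Multiplicative.toAdd.injective (congrArg Heis.a hab)
  rw [Nat.card_congr (MonoidHom.ofInjective hinj).symm.toEquiv]
  rw [Nat.card_congr (Multiplicative.toAdd)]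
  simp [card_Pr]

theorem central_comm_pow {Q : Type*} [Group Q] {x y : Q} (h : ⁅x, y⁆ ∈ Subgroup.center Q) (n : ℕ) :
    ⁅x ^ n, y⁆ = ⁅x, y⁆ ^ n := by
  have hx : y * x * y⁻¹ = ⁅x,y⁆⁻¹ * x := by simp [commutatorElement_def, mul_assoc]
  have h2 : y * x ^ n * y⁻¹ = ⁅x,y⁆⁻¹ ^ n * x ^ n := by
    rw [← conj_pow, hx]
    have hcm : Commute ⁅x, y⁆⁻¹ x := (Subgroup.mem_center_iff.1 (inv_mem h) x).symm
    exact hcm.mul_pow n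
  have : ⁅x ^ n, y⁆ = x ^ n * (y * x ^ n * y⁻¹)⁻¹ := by simp [commutatorElement_def, mul_assoc]
  rw [this, h2, mul_inv_rev, inv_pow, inv_inv, mul_inv_cancel_left]

theorem lemB {Q E : Type*} [Group Q] [Group E] (π : Q →* E) (hπ : Function.Surjective π)
    (hk : π.ker ≤ Subgroup.center Q) {p : ℕ} (k : E) (hkc : k ∈ Subgroup.center E)
    (Z : Subgroup E) (hZ : ∀ z ∈ Z, ∃ j : ℤ, z = (k ^ p) ^ j) (hxp : ∀ x : E, x ^ p ∈ Z)
    (s : Q) (hs : π s ∈ Z) : s ∈ Subgroup.center Q := by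
  obtain ⟨κ, rfl⟩ := hπ k
  have key : ∀ s, π s ∈ Z → ∃ j : ℤ, ∃ r ∈ Subgroup.center Q, s = (κ ^ p) ^ j * r := by
    intro s hs
    obtain ⟨j, hj⟩ := hZ _ hs
    refine ⟨j, ((κ ^ p) ^ j)⁻¹ * s, hk ?_, by group⟩
    simp [MonoidHom.mem_ker, hj]
  have hc : ∀ x, ⁅x, κ⁆ ∈ Subgroup.center Q := fun x => hk (by
    rw [MonoidHom.mem_ker, map_commutatorElement, commutatorElement_eq_one_iff_mul_comm]
    exact Subgroup.mem_center_iff.1 hkc _)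
  have h1 : ∀ x : Q, ⁅x, κ⁆ ^ p = 1 := by
    intro x
    rw [← central_comm_pow (hc x)]
    obtain ⟨j, r, hr, h⟩ := key (x ^ p) (by rw [map_pow]; exact hxp _)
    rw [h, commutatorElement_eq_one_iff_commute]
    exact (((Commute.refl κ).pow_left p).zpow_left j).mul_left
      (Subgroup.mem_center_iff.1 hr κ : Commute _ _).symm
  have hκ : κ ^ p ∈ Subgroup.center Q := by
    rw [Subgroup.mem_center_iff]
    intro x
    have h2 : ⁅κ, x⁆ = ⁅x, κ⁆⁻¹ := (commutatorElement_inv x κ).symm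
    have : ⁅κ ^ p, x⁆ = 1 := by
      rw [central_comm_pow (by rw [h2]; exact inv_mem (hc x)), h2, inv_pow, h1, inv_one]
    exact (commutatorElement_eq_one_iff_mul_comm.1 this).symm
  obtain ⟨j, r, hr, rfl⟩ := key s hs
  exact mul_mem (zpow_mem hκ j) hr

theorem frk {p n : ℕ} [Fact p.Prime] {W : Type*} [AddCommGroup W] [Module (ZMod p) W] [Finite W]
    (hc : Nat.card W = p ^ n) : ∃ f : W →+ (Fin n → ZMod p), Function.Bijective f := by
  have hp := Fact.out (p := p.Prime)
  have : Module.Finite (ZMod p) W := Module.Finite.of_finite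
  have h1 : Nat.card W = Nat.card (ZMod p) ^ Module.finrank (ZMod p) W :=
    Module.natCard_eq_pow_finrank
  have h2 : Module.finrank (ZMod p) W = n := by
    apply Nat.pow_right_injective hp.two_le
    simp only
    rw [← hc, h1, Nat.card_zmod]
  let b := Module.finBasisOfFinrankEq (ZMod p) W h2
  exact ⟨b.equivFun.toLinearMap.toAddMonoidHom, b.equivFun.bijective⟩

theorem exists_hom {p n : ℕ} [Fact p.Prime] {V : Type*} [CommGroup V] (he : ∀ v : V, v ^ p = 1)
    (hc : Nat.card V = p ^ n) :
    ∃ φ : V →* Multiplicative (Fin n → ZMod p), Function.Bijective φ := by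
  have hp := Fact.out (p := p.Prime)
  have : Finite V := Nat.finite_of_card_ne_zero (by rw [hc]; exact pow_ne_zero _ hp.ne_zero)
  let _ : Module (ZMod p) (Additive V) := AddCommGroup.zmodModule fun x => he x.toMul
  obtain ⟨f, hf⟩ := frk (p := p) (n := n) (W := Additive V) hc
  exact ⟨AddMonoidHom.toMultiplicativeRight f, hf⟩

theorem upper {p n : ℕ} [Fact p.Prime] {Q : Type*} [Group Q]
    (φ : Q →* Multiplicative (Fin n → ZMod p)) (hφ : Function.Surjective φ)
    (hk : φ.ker ≤ Subgroup.center Q) :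
    Nat.card (commutator Q) ∣ p ^ n.choose 2 := by
  have hcc : commutator Q ≤ Subgroup.center Q := (Abelianization.commutator_subset_ker φ).trans hk
  have hmem : ∀ x y : Q, ⁅x, y⁆ ∈ Subgroup.center Q := fun x y =>
    hcc (Subgroup.commutator_mem_commutator (Subgroup.mem_top _) (Subgroup.mem_top _))
  have hml : ∀ x y z : Q, ⁅x * y, z⁆ = ⁅x, z⁆ * ⁅y, z⁆ := by
    intro x y z
    have h := Subgroup.mem_center_iff.1 (hmem y z) 
    have : ⁅x * y, z⁆ = x * ⁅y, z⁆ * (z * x⁻¹ * z⁻¹) := by simp [commutatorElement_def, mul_assoc]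
    rw [this, h x, mul_assoc, ← h]; simp [commutatorElement_def, mul_assoc]
  have hpow : ∀ x : Q, x ^ p ∈ Subgroup.center Q := fun x => hk (by
    rw [MonoidHom.mem_ker, map_pow]
    apply Multiplicative.toAdd.injective
    ext i
    simp)
  choose f hf using fun i : Fin n => hφ (Multiplicative.ofAdd (Pi.single i 1))
  have hgen : ∀ q : Q, q ∈ Subgroup.closure (Set.range f) ⊔ Subgroup.center Q := by
    intro q
    have : ∃ r ∈ Subgroup.closure (Set.range f), φ r = φ q := by
      have h : (φ q) ∈ (Subgroup.closure (Set.range f)).map φ := by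
        have ha : φ q = ∏ i, (Multiplicative.ofAdd (Pi.single i 1 : Fin n → ZMod p)) ^ ((φ q).toAdd i).val := decomp (φ q)
        rw [ha]
        refine Subgroup.prod_mem _ fun i _ => Subgroup.pow_mem _ ?_ _
        exact ⟨f i, Subgroup.subset_closure ⟨i, rfl⟩, hf i⟩
      exact h
    obtain ⟨r, hr, hrq⟩ := this
    have : q = r * (r⁻¹ * q) := by group
    rw [this]
    refine Subgroup.mul_mem_sup hr (hk ?_)
    simp [MonoidHom.mem_ker, hrq]
  classical
  let T : Finset Q := Finset.univ.image fun q : Pr n => ⁅f q.1.1, f q.1.2⁆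
  have hff : ∀ i j, ⁅f i, f j⁆ ∈ Subgroup.closure (T : Set Q) := by
    have hlt : ∀ i j, i < j → ⁅f i, f j⁆ ∈ Subgroup.closure (T : Set Q) := fun i j h =>
      Subgroup.subset_closure (Finset.mem_coe.2 (Finset.mem_image.2 ⟨⟨(i, j), h⟩, Finset.mem_univ _, rfl⟩))
    intro i j
    rcases lt_trichotomy i j with h | rfl | h
    · exact hlt i j h
    · simp
    · rw [← commutatorElement_inv]; exact inv_mem (hlt j i h)
  have hsub : ∀ (y : Q), (∀ i, ⁅f i, y⁆ ∈ Subgroup.closure (T : Set Q)) →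
      ∀ x : Q, ⁅x, y⁆ ∈ Subgroup.closure (T : Set Q) := by
    intro y hy
    let g : Q →* Q := MonoidHom.mk' (fun x => ⁅x, y⁆) fun a b => hml a b y
    have : Subgroup.closure (Set.range f) ⊔ Subgroup.center Q ≤ (Subgroup.closure (T : Set Q)).comap g := by
      refine sup_le ((Subgroup.closure_le _).2 ?_) ?_
      · rintro _ ⟨i, rfl⟩
        exact hy i
      · intro z hz
        have : ⁅z, y⁆ = 1 := commutatorElement_eq_one_iff_mul_comm.2 (Subgroup.mem_center_iff.1 hz y).symm
        change ⁅z, y⁆ ∈ Subgroup.closure (T : Set Q)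
        rw [this]; exact one_mem _
    intro x
    exact this (hgen x)
  have hall : ∀ x y : Q, ⁅x, y⁆ ∈ Subgroup.closure (T : Set Q) := by
    intro x y
    refine hsub y (fun i => ?_) x
    rw [← commutatorElement_inv]
    exact inv_mem (hsub (f i) (fun j => hff j i) y)
  have hC : commutator Q = Subgroup.closure (T : Set Q) := by
    apply le_antisymm
    · rw [commutator_def, Subgroup.commutator_le]
      intro x _ y _; exact hall x y
    · rw [Subgroup.closure_le]
      intro t ht
      obtain ⟨q, -, rfl⟩ := Finset.mem_image.1 (Finset.mem_coe.1 ht)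
      exact Subgroup.commutator_mem_commutator (Subgroup.mem_top _) (Subgroup.mem_top _)
  have hTp : ∀ t ∈ Subgroup.closure (T : Set Q), t ^ p = 1 := by
    intro t ht
    induction ht using Subgroup.closure_induction with
    | mem t ht =>
      obtain ⟨q, -, rfl⟩ := Finset.mem_image.1 (Finset.mem_coe.1 ht)
      rw [← central_comm_pow (hmem _ _)]
      exact commutatorElement_eq_one_iff_mul_comm.2 (Subgroup.mem_center_iff.1 (hpow _) _).symm
    | one => simp
    | mul x y hx hy ihx ihy =>
      have : Commute x y := Subgroup.mem_center_iff.1 (hcc (hC.ge hy)) x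
      rw [this.mul_pow, ihx, ihy, one_mul]
    | inv x hx ih => rw [inv_pow, ih, inv_one]
  rw [hC]
  let _ : CommGroup (Subgroup.closure (T : Set Q)) :=
    { (inferInstance : Group (Subgroup.closure (T : Set Q))) with
      mul_comm := fun a b => Subtype.ext (Subgroup.mem_center_iff.1 (hcc (hC.ge b.2)) a.1) }
  have : Group.FG (Subgroup.closure (T : Set Q)) := Group.closure_finset_fg T
  have h1 := card_dvd_exponent_pow_rank' (G := Subgroup.closure (T : Set Q)) (n := p)
    (fun g => Subtype.ext (by simpa using hTp g.1 g.2))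
  refine h1.trans (pow_dvd_pow _ ?_)
  refine (Subgroup.rank_closure_finset_le_card T).trans ?_
  refine Finset.card_image_le.trans ?_
  rw [Finset.card_univ, card_Pr]

theorem mk_center {F : Type*} [Group F] (N : Subgroup F) [N.Normal] (f : F) :
    (QuotientGroup.mk f : F ⧸ N) ∈ Subgroup.center (F ⧸ N) ↔ ∀ g : F, ⁅g, f⁆ ∈ N := by
  rw [Subgroup.mem_center_iff]
  have key : ∀ g : F, ⁅g, f⁆ ∈ N ↔
      (QuotientGroup.mk g : F ⧸ N) * QuotientGroup.mk f = QuotientGroup.mk f * QuotientGroup.mk g := by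
    intro g
    rw [← QuotientGroup.eq_one_iff, ← commutatorElement_eq_one_iff_mul_comm]
    rfl
  constructor
  · intro h g
    exact (key g).2 (h _)
  · intro h g
    obtain ⟨g, rfl⟩ := QuotientGroup.mk_surjective g
    exact (key g).1 (h g)

theorem relIndex_free {p n : ℕ} [Fact p.Prime] {X : Type*}
    (φ : FreeGroup X →* Multiplicative (Fin n → ZMod p)) (hφ : Function.Surjective φ) :
    (⁅(⊤ : Subgroup (FreeGroup X)), φ.ker⁆).relIndex (commutator (FreeGroup X)) = p ^ n.choose 2 := by
  refine Nat.dvd_antisymm ?_ (lower φ hφ)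
  have hN : ⁅(⊤ : Subgroup (FreeGroup X)), φ.ker⁆ ≤ φ.ker := Subgroup.commutator_le_right _ _
  let ψ : FreeGroup X ⧸ ⁅(⊤ : Subgroup (FreeGroup X)), φ.ker⁆ →* Multiplicative (Fin n → ZMod p) :=
    QuotientGroup.lift _ φ hN
  have h := upper ψ (fun v => by
    obtain ⟨f, hf⟩ := hφ v
    exact ⟨QuotientGroup.mk f, hf⟩) (by
    intro q hq
    obtain ⟨f, rfl⟩ := QuotientGroup.mk_surjective q
    rw [mk_center]
    intro g
    exact Subgroup.commutator_mem_commutator (Subgroup.mem_top _) hq)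
  have e := Subgroup.relIndex_ker (commutator (FreeGroup X))
    (QuotientGroup.mk' ⁅(⊤ : Subgroup (FreeGroup X)), φ.ker⁆)
  rw [QuotientGroup.ker_mk'] at e
  rw [e, commutator_def, Subgroup.map_commutator,
    Subgroup.map_top_of_surjective _ (QuotientGroup.mk'_surjective _)]
  exact h

theorem main_aux {p n : ℕ} [Fact p.Prime] {E : Type*} [Group E] (Z : Subgroup E) [Z.Normal]
    (hZc : commutator E = Z) (hcard : Nat.card Z = p) (hE : Nat.card (E ⧸ Z) = p ^ n)
    (k : E) (hkc : k ∈ Subgroup.center E)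
    (hZ : ∀ z ∈ Z, ∃ j : ℤ, z = (k ^ p) ^ j) (hxp : ∀ x : E, x ^ p ∈ Z) :
    Nat.card (SchurMultiplier E) * p = p ^ n.choose 2 := by
  let _ : CommGroup (E ⧸ Z) :=
    { (inferInstance : Group (E ⧸ Z)) with
      mul_comm := by
        intro a b
        obtain ⟨a, rfl⟩ := QuotientGroup.mk_surjective a
        obtain ⟨b, rfl⟩ := QuotientGroup.mk_surjective b
        rw [← commutatorElement_eq_one_iff_mul_comm]
        have : ⁅a, b⁆ ∈ Z :=
          hZc.le (Subgroup.commutator_mem_commutator (Subgroup.mem_top _) (Subgroup.mem_top _))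
        exact (QuotientGroup.eq_one_iff _).2 this }
  obtain ⟨φ0, hφ0⟩ := exists_hom (p := p) (n := n) (V := E ⧸ Z) (by
    intro v
    obtain ⟨a, rfl⟩ := QuotientGroup.mk_surjective v
    exact (QuotientGroup.eq_one_iff _).2 (hxp a)) hE
  let π : FreeGroup E →* E := FreeGroup.lift (id : E → E)
  have hπ : Function.Surjective π := fun e => ⟨FreeGroup.of e, by simp [π]⟩
  let φ1 : E →* Multiplicative (Fin n → ZMod p) := φ0.comp (QuotientGroup.mk' Z)
  let φ : FreeGroup E →* Multiplicative (Fin n → ZMod p) := φ1.comp π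
  have hφ : Function.Surjective φ :=
    (hφ0.2.comp (QuotientGroup.mk'_surjective Z)).comp hπ
  have hS : ∀ f, f ∈ φ.ker ↔ π f ∈ Z := by
    intro f
    rw [MonoidHom.mem_ker, ← QuotientGroup.eq_one_iff, ← hφ0.1.eq_iff, map_one]
    rfl
  have hR : presentationKernel E = π.ker := rfl
  have hRS : ⁅(⊤ : Subgroup (FreeGroup E)), φ.ker⁆ = ⁅(⊤ : Subgroup (FreeGroup E)), π.ker⁆ := by
    apply le_antisymm
    · rw [Subgroup.commutator_le]
      intro g _ s hs
      have hN : ⁅(⊤ : Subgroup (FreeGroup E)), π.ker⁆ ≤ π.ker := Subgroup.commutator_le_right _ _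
      let ψ : FreeGroup E ⧸ ⁅(⊤ : Subgroup (FreeGroup E)), π.ker⁆ →* E :=
        QuotientGroup.lift _ π hN
      have := lemB ψ (fun v => by
        obtain ⟨f, hf⟩ := hπ v
        exact ⟨QuotientGroup.mk f, hf⟩) (by
        intro q hq
        obtain ⟨f, rfl⟩ := QuotientGroup.mk_surjective q
        rw [mk_center]
        intro g
        exact Subgroup.commutator_mem_commutator (Subgroup.mem_top _) hq) k hkc Z hZ hxp
        (QuotientGroup.mk s) ((hS s).1 hs)
      exact (mk_center _ _).1 this g
    · refine Subgroup.commutator_mono le_rfl ?_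
      intro f hf
      rw [hS, MonoidHom.mem_ker.1 hf]
      exact one_mem _
  have h1 : Nat.card (SchurMultiplier E) =
      (⁅(⊤ : Subgroup (FreeGroup E)), π.ker⁆).relIndex (π.ker ⊓ commutator (FreeGroup E)) := rfl
  have h2 : (π.ker ⊓ commutator (FreeGroup E)).relIndex (commutator (FreeGroup E)) = p := by
    rw [Subgroup.inf_relIndex_right, Subgroup.relIndex_ker, commutator_def, Subgroup.map_commutator,
      Subgroup.map_top_of_surjective _ hπ, ← commutator_def, hZc, hcard]
  have h3 := Subgroup.relIndex_mul_relIndex ⁅(⊤ : Subgroup (FreeGroup E)), π.ker⁆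
    (π.ker ⊓ commutator (FreeGroup E)) (commutator (FreeGroup E))
    (le_inf (Subgroup.commutator_le_right _ _) (Subgroup.commutator_mono le_rfl le_top)) inf_le_right
  rw [← h1, h2, ← hRS, relIndex_free φ hφ] at h3
  exact h3

end Aux

open scoped commutatorElement

/-- The Schur multiplier of a group of type `E(2)` of order `p^(2m+2)` has order
`p^(2m² + m - 1)`. -/
theorem schurMultiplier_typeE2 {p m : ℕ} (hp : p.Prime) {E : Type*} [Group E]
    (hE : IsTypeE2 p m E) (hEcard : Nat.card E = p ^ (2 * m + 2)) :
    Nat.card (SchurMultiplier E) = p ^ (2 * m ^ 2 + m - 1) := by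
  have hpF : Fact p.Prime := ⟨hp⟩
  have hfin : Finite E := Nat.finite_of_card_ne_zero (by rw [hEcard]; exact pow_ne_zero _ hp.ne_zero)
  obtain ⟨H, K, ⟨hHc, -, hHcard⟩, hH, hKcyc, hK, hcomm, hsup, hinf⟩ := hE
  have hKc : K ≤ Subgroup.center E := by
    intro k hk
    have : H ⊔ K ≤ Subgroup.centralizer {k} := by
      refine sup_le ?_ ?_
      · intro h hh
        rw [Subgroup.mem_centralizer_singleton_iff]
        exact hcomm h hh k hk
      · intro k' hk'
        rw [Subgroup.mem_centralizer_singleton_iff]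
        let _ := IsCyclic.commGroup (α := K)
        exact congrArg Subtype.val (mul_comm (⟨k', hk'⟩ : K) ⟨k, hk⟩)
    rw [hsup] at this
    rw [Subgroup.mem_center_iff]
    intro g
    exact Subgroup.mem_centralizer_singleton_iff.1 (this (Subgroup.mem_top g))
  have hKn : K.Normal := ⟨fun k hk g => by
    rw [Subgroup.mem_center_iff.1 (hKc hk) g]; simpa using hk⟩
  have hdec : ∀ x : E, ∃ h ∈ H, ∃ k ∈ K, h * k = x := by
    intro x
    have : x ∈ H ⊔ K := by rw [hsup]; exact Subgroup.mem_top _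
    exact Subgroup.mem_sup_of_normal_right.1 this
  have hcH : ∀ h : H, h ∈ Subgroup.center H ↔ (h : E) ∈ H ⊓ K := by
    intro h
    rw [← hinf]; rfl
  have hZcard : Nat.card (H ⊓ K : Subgroup E) = p := by
    rw [← hHcard, ← hinf]
    exact (Nat.card_congr (Subgroup.subgroupOfEquivOfLe inf_le_left).toEquiv).symm
  have hcommH : ∀ a b : H, ⁅a, b⁆ ∈ Subgroup.center H := fun a b => hHc.ge
    (Subgroup.commutator_mem_commutator (Subgroup.mem_top _) (Subgroup.mem_top _))
  have hZc : commutator E = H ⊓ K := by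
    apply le_antisymm
    · rw [commutator_def, Subgroup.commutator_le]
      intro x _ y _
      obtain ⟨h, hh, k, hk, rfl⟩ := hdec x
      obtain ⟨h', hh', k', hk', rfl⟩ := hdec y
      have e : ⁅h * k, h' * k'⁆ = ⁅h, h'⁆ := by
        have c1 : ∀ g, g * k = k * g := Subgroup.mem_center_iff.1 (hKc hk)
        have c2 : ∀ g, g * k' = k' * g := Subgroup.mem_center_iff.1 (hKc hk')
        have c1' : ∀ g, g * k⁻¹ = k⁻¹ * g := Subgroup.mem_center_iff.1 (inv_mem (hKc hk))
        rw [commutatorElement_def, commutatorElement_def]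
        calc h * k * (h' * k') * (h * k)⁻¹ * (h' * k')⁻¹
            = h * (k * (h' * k')) * (k⁻¹ * h⁻¹) * (k'⁻¹ * h'⁻¹) := by group
          _ = h * h' * (k' * h⁻¹) * k'⁻¹ * h'⁻¹ := by rw [← c1]; group
          _ = h * h' * h⁻¹ * h'⁻¹ := by rw [← c2]; group
      rw [e]
      exact (hcH ⁅(⟨h, hh⟩ : H), ⟨h', hh'⟩⁆).1 (hcommH _ _)
    · intro z hz
      have h1 : (⟨z, hz.1⟩ : H) ∈ commutator H := hHc.le ((hcH _).2 hz)
      have h2 : z ∈ (commutator H).map H.subtype := ⟨_, h1, rfl⟩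
      rw [commutator_def, Subgroup.map_commutator] at h2
      exact Subgroup.commutator_mono le_top le_top h2
  have hZn : (H ⊓ K).Normal := by rw [← hZc]; infer_instance
  have hKp : ∀ k ∈ K, k ^ p ∈ H ⊓ K := by
    intro k hk
    have hidx : ((H ⊓ K).subgroupOf K).index = p := by
      have h1 := ((H ⊓ K).subgroupOf K).card_mul_index
      rw [Nat.card_congr (Subgroup.subgroupOfEquivOfLe (inf_le_right : H ⊓ K ≤ K)).toEquiv, hZcard,
        hK, pow_two] at h1
      exact Nat.eq_of_mul_eq_mul_left hp.pos h1
    have := ((H ⊓ K).subgroupOf K).pow_index_mem ⟨k, hk⟩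
    rw [hidx] at this
    exact this
  have hxp : ∀ x : E, x ^ p ∈ H ⊓ K := by
    intro x
    obtain ⟨h, hh, k, hk, rfl⟩ := hdec x
    have hc : Commute h k := hcomm h hh k hk
    rw [hc.mul_pow]
    refine mul_mem ?_ (hKp k hk)
    refine (hcH ((⟨h, hh⟩ : H) ^ p)).1 ?_
    rw [Subgroup.mem_center_iff]
    intro g
    refine Eq.symm ?_
    rw [← commutatorElement_eq_one_iff_mul_comm, central_comm_pow (hcommH _ _)]
    have := pow_card_eq_one' (x := (⟨_, hcommH ⟨h, hh⟩ g⟩ : Subgroup.center H))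
    rw [hHcard] at this
    exact congrArg Subtype.val this
  obtain ⟨k, hk⟩ := hKcyc.exists_generator
  have hok : orderOf (k : E) = p ^ 2 := by
    rw [Subgroup.orderOf_coe, orderOf_eq_card_of_forall_mem_zpowers hk, hK]
  have hokp : orderOf ((k : E) ^ p) = p := by
    rw [orderOf_pow_of_dvd hp.ne_zero (by rw [hok]; exact dvd_pow_self p two_ne_zero), hok, pow_two,
      Nat.mul_div_cancel _ hp.pos]
  have hzp : Subgroup.zpowers ((k : E) ^ p) = H ⊓ K := by
    apply Subgroup.eq_of_le_of_card_ge
    · rw [Subgroup.zpowers_le]; exact hxp _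
    · rw [hZcard, Nat.card_zpowers, hokp]
  have hVcard : Nat.card (E ⧸ (H ⊓ K)) = p ^ (2 * m + 1) := by
    have h1 := (H ⊓ K).card_mul_index
    rw [hZcard, hEcard, pow_succ' p (2 * m + 1)] at h1
    exact Nat.eq_of_mul_eq_mul_left hp.pos h1
  have hm : m ≠ 0 := by
    rintro rfl
    have hcm : ∀ a b : H, a * b = b * a := by
      have : IsCyclic H := isCyclic_of_prime_card (p := p) (by simpa using hH)
      let _ := IsCyclic.commGroup (α := H)
      exact mul_comm
    have : commutator H = ⊥ := by
      rw [commutator_def, eq_bot_iff, Subgroup.commutator_le]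
      intro a _ b _
      exact Subgroup.mem_bot.2 (commutatorElement_eq_one_iff_mul_comm.2 (hcm a b))
    rw [hHc, this, Subgroup.card_bot] at hHcard
    exact hp.one_lt.ne hHcard
  have hfinal := main_aux (H ⊓ K) hZc hZcard hVcard (k : E) (hKc k.2) (fun z hz => by
    rw [← hzp] at hz
    obtain ⟨j, hj⟩ := Subgroup.mem_zpowers_iff.1 hz
    exact ⟨j, hj.symm⟩) hxp
  have hch : (2 * m + 1).choose 2 = (2 * m ^ 2 + m - 1) + 1 := by
    rw [Nat.choose_two_right]
    have : 1 ≤ m := Nat.one_le_iff_ne_zero.2 hm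
    have h2 : (2 * m + 1) * (2 * m + 1 - 1) = (2 * m ^ 2 + m) * 2 := by
      rw [Nat.add_sub_cancel]; ring
    rw [h2, Nat.mul_div_cancel _ two_pos]
    omega
  rw [hch, pow_succ] at hfinal
  exact Nat.eq_of_mul_eq_mul_right hp.pos hfinal
end
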